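/- arXiv:1507.04838 — 2 statements merged into one kernel-verified Lean document; each statement's English description precedes it below -/
import Mathlib

section
/- Let k be a field and ξ ∈ k ∖ {0} not a root of unity. Then the idempotents of the twisted Motzkin monoid coincide with the idempotents of the twisted Jones monoid: E(M_n^ξ) = E(J_n^ξ). -/
open Relation

/-! ### The partition monoid and its planar submonoids -/

/-- Vertices of a partition diagram: `Sum.inl i` is the upper vertex `i`,
`Sum.inr i` is the lower vertex `i′`. -/
abbrev PV (n : ℕ) := Fin n ⊕ Fin n

/-- An element of the partition monoid `P_n`: a set partition of the `2n` vertices,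
encoded as an equivalence relation (setoid). -/
abbrev PElt (n : ℕ) := Setoid (PV n)

/-- Three layers of vertices, used to form products. -/
abbrev TV (n : ℕ) := Fin n ⊕ (Fin n ⊕ Fin n)

/-- Embedding of the vertices of the upper factor into the three layers. -/
def upEmb {n : ℕ} : PV n → TV n
  | .inl i => .inl i
  | .inr i => .inr (.inl i)

/-- Embedding of the vertices of the lower factor into the three layers. -/
def downEmb {n : ℕ} : PV n → TV n
  | .inl i => .inr (.inl i)
  | .inr i => .inr (.inr i)

/-- Embedding of the vertices of the product into the three layers. -/
def outEmb {n : ℕ} : PV n → TV n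
  | .inl i => .inl i
  | .inr i => .inr (.inr i)

/-- The stacked graph of `a` on `b`: relations of `a` on layers 1–2 together with
relations of `b` on layers 2–3. -/
def stackRel {n : ℕ} (a b : PElt n) : TV n → TV n → Prop := fun x y =>
  (∃ p q : PV n, a.r p q ∧ x = upEmb p ∧ y = upEmb q) ∨
  (∃ p q : PV n, b.r p q ∧ x = downEmb p ∧ y = downEmb q)

/-- The finest common coarsening (transitive closure) of the stacked graph. -/
def stackSetoid {n : ℕ} (a b : PElt n) : Setoid (TV n) :=
  EqvGen.setoid (stackRel a b)

/-- The product in the partition monoid: restrict the coarsening of the stacked graph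
to the outer two layers. -/
def pmul {n : ℕ} (a b : PElt n) : PElt n :=
  Setoid.comap outEmb (stackSetoid a b)

/-- The identity of the partition monoid: blocks `{i, i′}`. -/
def pid (n : ℕ) : PElt n :=
  ⟨fun x y => Sum.elim id id x = Sum.elim id id y,
    ⟨fun _ => rfl, fun h => h.symm, fun h₁ h₂ => h₁.trans h₂⟩⟩

/-- A vertex of the triple-layer graph lies in the identified middle row. -/
def isMiddle {n : ℕ} : TV n → Prop
  | .inr (.inl _) => True
  | _ => False

/-- `m(a,b)`: the number of floating components (components of the stacked graph of `a` on `b`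
contained entirely in the identified middle row). -/
noncomputable def floatCount {n : ℕ} (a b : PElt n) : ℕ :=
  Nat.card {c : Quotient (stackSetoid a b) //
    ∀ x : TV n, Quotient.mk (stackSetoid a b) x = c → isMiddle x}

/-- A block (equivalence class) is a transversal if it contains both an upper
and a lower vertex. -/
def IsTransClass {n : ℕ} (a : PElt n) (c : Quotient a) : Prop :=
  (∃ i : Fin n, Quotient.mk a (.inl i) = c) ∧ (∃ j : Fin n, Quotient.mk a (.inr j) = c)

/-- The rank of a partition: the number of transversal blocks. -/
noncomputable def prank {n : ℕ} (a : PElt n) : ℕ :=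
  Nat.card {c : Quotient a // IsTransClass a c}

/-- Position of a vertex in the boundary order `1, …, n, n′, …, 1′` of the rectangle. -/
def ordIdx (n : ℕ) : PV n → ℕ
  | .inl i => i.val
  | .inr i => 2 * n - 1 - i.val

/-- Planarity: the partition is non-crossing with respect to the boundary order
`1 < ⋯ < n < n′ < ⋯ < 1′`. -/
def IsPlanar {n : ℕ} (a : PElt n) : Prop :=
  ¬ ∃ w x y z : PV n, ordIdx n w < ordIdx n x ∧ ordIdx n x < ordIdx n y ∧
      ordIdx n y < ordIdx n z ∧ a.r w y ∧ a.r x z ∧ ¬ a.r w x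

/-- The size of the block containing a given vertex. -/
noncomputable def blockCard {n : ℕ} (a : PElt n) (x : PV n) : ℕ :=
  Nat.card {y : PV n // a.r x y}

/-- The Motzkin monoid: planar partitions with all blocks of size at most 2. -/
def Motzkin (n : ℕ) : Set (PElt n) :=
  {a | IsPlanar a ∧ ∀ x : PV n, blockCard a x ≤ 2}

/-- The Jones (Temperley–Lieb) monoid: planar partitions with all blocks of size
exactly 2. -/
def Jones (n : ℕ) : Set (PElt n) :=
  {a | IsPlanar a ∧ ∀ x : PV n, blockCard a x = 2}

/-! ### The interface graph -/

/-- Lower edge of the interface graph `Γ(a)`: a block `{i,j}` of `a` on upper vertices. -/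
def LowEdge {n : ℕ} (a : PElt n) (i j : Fin n) : Prop :=
  i ≠ j ∧ a.r (.inl i) (.inl j)

/-- Upper edge of the interface graph `Γ(a)`: a block `{i′,j′}` of `a` on lower vertices. -/
def UpEdge {n : ℕ} (a : PElt n) (i j : Fin n) : Prop :=
  i ≠ j ∧ a.r (.inr i) (.inr j)

/-- Vertex `i` of `Γ(a)` carries a lower edge. -/
def hasLow {n : ℕ} (a : PElt n) (i : Fin n) : Prop := ∃ j, LowEdge a i j

/-- Vertex `i` of `Γ(a)` carries an upper edge. -/
def hasUp {n : ℕ} (a : PElt n) (i : Fin n) : Prop := ∃ j, UpEdge a i j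

/-- Vertex `i` is active downwards: the upper vertex `i` lies in a transversal of `a`. -/
def activeDown {n : ℕ} (a : PElt n) (i : Fin n) : Prop := ∃ j : Fin n, a.r (.inl i) (.inr j)

/-- Vertex `i` is active upwards: the lower vertex `i′` lies in a transversal of `a`. -/
def activeUp {n : ℕ} (a : PElt n) (i : Fin n) : Prop := ∃ j : Fin n, a.r (.inr i) (.inl j)

/-- Vertex `i` is inert downwards: the upper vertex `i` is a singleton block of `a`. -/
def inertDown {n : ℕ} (a : PElt n) (i : Fin n) : Prop := ∀ y, a.r (.inl i) y → y = .inl i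

/-- Vertex `i` is inert upwards: the lower vertex `i′` is a singleton block of `a`. -/
def inertUp {n : ℕ} (a : PElt n) (i : Fin n) : Prop := ∀ y, a.r (.inr i) y → y = .inr i

/-- Adjacency in the interface graph `Γ(a)`. -/
def gedge {n : ℕ} (a : PElt n) (i j : Fin n) : Prop := LowEdge a i j ∨ UpEdge a i j

/-- Connectivity in the interface graph `Γ(a)`. -/
def gconn {n : ℕ} (a : PElt n) : Fin n → Fin n → Prop := EqvGen (gedge a)

/-- `θ` is (the vertex set of) a connected component of `Γ(a)`. -/
def IsComp {n : ℕ} (a : PElt n) (θ : Set (Fin n)) : Prop :=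
  θ.Nonempty ∧ ∀ i ∈ θ, ∀ j : Fin n, (gconn a i j ↔ j ∈ θ)

/-- `θ` is a cycle component of `Γ(a)`: every vertex carries both a lower and an upper edge. -/
def IsCycleComp {n : ℕ} (a : PElt n) (θ : Set (Fin n)) : Prop :=
  IsComp a θ ∧ ∀ i ∈ θ, hasLow a i ∧ hasUp a i

/-- `θ` is a path component of `Γ(a)`: some vertex misses an edge on some side. -/
def IsPathComp {n : ℕ} (a : PElt n) (θ : Set (Fin n)) : Prop :=
  IsComp a θ ∧ ∃ i ∈ θ, ¬ hasLow a i ∨ ¬ hasUp a i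

/-- An inert path: every terminus is inert on its free side. -/
def IsInertPathComp {n : ℕ} (a : PElt n) (θ : Set (Fin n)) : Prop :=
  IsPathComp a θ ∧ ∀ i ∈ θ,
    (¬ hasLow a i → inertDown a i) ∧ (¬ hasUp a i → inertUp a i)

/-- A trans-active path: even length (its two free ends lie on opposite sides) with
both termini active on their free sides. -/
def IsTransActivePathComp {n : ℕ} (a : PElt n) (θ : Set (Fin n)) : Prop :=
  IsPathComp a θ ∧
  (∃! i : Fin n, i ∈ θ ∧ ¬ hasLow a i) ∧ (∃! i : Fin n, i ∈ θ ∧ ¬ hasUp a i) ∧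
  ∀ i ∈ θ, (¬ hasLow a i → activeDown a i) ∧ (¬ hasUp a i → activeUp a i)

/-- The number of edges of `Γ(a)` contained in `θ` (its length, for a component `θ`). -/
noncomputable def compEdgeCount {n : ℕ} (a : PElt n) (θ : Set (Fin n)) : ℕ :=
  Nat.card {p : Fin n × Fin n // p.1 < p.2 ∧ p.1 ∈ θ ∧ p.2 ∈ θ ∧ LowEdge a p.1 p.2} +
  Nat.card {p : Fin n × Fin n // p.1 < p.2 ∧ p.1 ∈ θ ∧ p.2 ∈ θ ∧ UpEdge a p.1 p.2}

/-! ### The map `α ↦ α̂` and the sets `D`, `Θ(δ)` -/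

/-- The 0-based position of `i` among the upward-active vertices. -/
noncomputable def posUp {n : ℕ} (a : PElt n) (i : Fin n) : ℕ :=
  Nat.card {j : Fin n // j < i ∧ activeUp a j}

/-- The 0-based position of `i` among the downward-active vertices. -/
noncomputable def posDown {n : ℕ} (a : PElt n) (i : Fin n) : ℕ :=
  Nat.card {j : Fin n // j < i ∧ activeDown a j}

/-- `i` and `j` are consecutive upward-active vertices paired in forming `α̂`
(`i` in an even position `2t`, `j` in position `2t+1 < 2⌊r/2⌋`). -/
noncomputable def pairedUp {n : ℕ} (a : PElt n) (i j : Fin n) : Prop :=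
  activeUp a i ∧ activeUp a j ∧ Even (posUp a i) ∧ posUp a j = posUp a i + 1 ∧
    posUp a j < 2 * (prank a / 2)

/-- `i` and `j` are consecutive downward-active vertices paired in forming `α̂`. -/
noncomputable def pairedDown {n : ℕ} (a : PElt n) (i j : Fin n) : Prop :=
  activeDown a i ∧ activeDown a j ∧ Even (posDown a i) ∧ posDown a j = posDown a i + 1 ∧
    posDown a j < 2 * (prank a / 2)

/-- The transversal relations removed in forming `α̂` (those of the first `2⌊r/2⌋`
transversals). -/
noncomputable def removedTrans {n : ℕ} (a : PElt n) (x y : PV n) : Prop :=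
  ∃ i j : Fin n, a.r (.inl i) (.inr j) ∧ posDown a i < 2 * (prank a / 2) ∧
    ((x = .inl i ∧ y = .inr j) ∨ (x = .inr j ∧ y = .inl i))

/-- The generating relation of `α̂`: the relations of `α` minus the removed transversals,
plus the new blocks pairing consecutive active vertices. -/
noncomputable def hatRel {n : ℕ} (a : PElt n) (x y : PV n) : Prop :=
  (a.r x y ∧ ¬ removedTrans a x y) ∨
  (∃ i j : Fin n, pairedUp a i j ∧
      ((x = .inr i ∧ y = .inr j) ∨ (x = .inr j ∧ y = .inr i))) ∨
  (∃ i j : Fin n, pairedDown a i j ∧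
      ((x = .inl i ∧ y = .inl j) ∨ (x = .inl j ∧ y = .inl i)))

/-- The element `α̂` obtained from `α` by pairing off consecutive active vertices. -/
noncomputable def hat {n : ℕ} (a : PElt n) : PElt n := EqvGen.setoid (hatRel a)

/-- The idempotents of a subset `S` (with respect to the partition product). -/
def Eset {n : ℕ} (S : Set (PElt n)) : Set (PElt n) := {a ∈ S | pmul a a = a}

/-- `D(S) = D₀ ∪ E(D₁)`: the idempotents of `S` of rank at most 1. -/
def Dset {n : ℕ} (S : Set (PElt n)) : Set (PElt n) :=
  {d ∈ S | pmul d d = d ∧ prank d ≤ 1}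

/-- `θ` lies (entirely) to the left of the leftmost transversal of `a`. -/
def LeftOfTrans {n : ℕ} (a : PElt n) (θ : Set (Fin n)) : Prop :=
  ∀ i ∈ θ, ∀ j : Fin n, activeDown a j ∨ activeUp a j → i < j

/-- `Θ(a)`: the cycle components of `Γ(a)` lying entirely to the left of the leftmost
transversal. -/
def ThetaSet {n : ℕ} (a : PElt n) : Set (Set (Fin n)) :=
  {θ | IsCycleComp a θ ∧ LeftOfTrans a θ}

/-! ### Returns, special pairs and `θ`-covers -/

/-- The block `{i,j}` of `a` on upper vertices is an upper return: no upper block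
`{k,l}` has `k<i<j<l`, and no transversal contains an upper vertex smaller than `i`. -/
def UpperReturn {n : ℕ} (a : PElt n) (i j : Fin n) : Prop :=
  i < j ∧ a.r (.inl i) (.inl j) ∧
  (¬ ∃ k l : Fin n, k < i ∧ j < l ∧ a.r (.inl k) (.inl l)) ∧
  (¬ ∃ k : Fin n, k < i ∧ activeDown a k)

/-- The block `{i′,j′}` of `a` on lower vertices is a lower return. -/
def LowerReturn {n : ℕ} (a : PElt n) (i j : Fin n) : Prop :=
  i < j ∧ a.r (.inr i) (.inr j) ∧
  (¬ ∃ k l : Fin n, k < i ∧ j < l ∧ a.r (.inr k) (.inr l)) ∧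
  (¬ ∃ k : Fin n, k < i ∧ activeUp a k)

/-- The interface-graph adjacency of `a` after deleting the lower-vertex block `{i′,j′}`
and the upper-vertex block `{k,l}`. -/
def redEdge {n : ℕ} (a : PElt n) (i j k l : Fin n) (u v : Fin n) : Prop :=
  (LowEdge a u v ∧ ({u, v} : Set (Fin n)) ≠ {k, l}) ∨
  (UpEdge a u v ∧ ({u, v} : Set (Fin n)) ≠ {i, j})

/-- The relation generating the `θ`-cover `a − (e′,f)`, for `e′ = {i′,j′}` and
`f = {k,l}`: delete the two blocks, and join each freed upper vertex to the freed lower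
vertex reached along its path. -/
def coverRel {n : ℕ} (a : PElt n) (i j k l : Fin n) (x y : PV n) : Prop :=
  (a.r x y ∧ ({x, y} : Set (PV n)) ≠ {.inl k, .inl l} ∧
    ({x, y} : Set (PV n)) ≠ {.inr i, .inr j}) ∨
  (∃ u v : Fin n, u ∈ ({k, l} : Set (Fin n)) ∧ v ∈ ({i, j} : Set (Fin n)) ∧
    EqvGen (redEdge a i j k l) u v ∧
    ((x = .inl u ∧ y = .inr v) ∨ (x = .inr v ∧ y = .inl u)))

/-- The `θ`-cover `a − (e′,f)` as a partition. -/
def coverElt {n : ℕ} (a : PElt n) (i j k l : Fin n) : PElt n :=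
  EqvGen.setoid (coverRel a i j k l)

/-- `b` is a `θ`-cover of `a`: `θ ∈ Θ(a)` and `b = a − (e′,f)` for some special pair
`(e′,f)` over `θ` (one lower-return and one upper-return edge of `θ`). -/
def IsThetaCover {n : ℕ} (a : PElt n) (θ : Set (Fin n)) (b : PElt n) : Prop :=
  θ ∈ ThetaSet a ∧
  ∃ i j k l : Fin n, i ∈ θ ∧ j ∈ θ ∧ k ∈ θ ∧ l ∈ θ ∧
    LowerReturn a i j ∧ UpperReturn a k l ∧ b = coverElt a i j k l

/-- `a ≪_d b`: `a = b` or there is a chain of `θ`-covers from `a` to `b` along pairwise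
distinct cycles `θ ∈ Θ(d)`. -/
def llRel {n : ℕ} (d : PElt n) (a b : PElt n) : Prop :=
  a = b ∨ ∃ (h : ℕ) (θs : Fin h → Set (Fin n)) (as : Fin (h + 1) → PElt n),
    Function.Injective θs ∧ (∀ ι, θs ι ∈ ThetaSet d) ∧
    as 0 = a ∧ as (Fin.last h) = b ∧
    ∀ ι : Fin h, IsThetaCover (as ι.castSucc) (θs ι) (as ι.succ)

/-- The fibre `F_d = {α ∈ E(S) : α̂ = d}`. -/
def Fib {n : ℕ} (S : Set (PElt n)) (d : PElt n) : Set (PElt n) :=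
  {a ∈ Eset S | hat a = d}

/-- `C_d(θ) = C*_d(θ) ∪ {d}`, where `C*_d(θ)` is the set of `θ`-covers of `d`. -/
def CoverSet {n : ℕ} (d : PElt n) (θ : Set (Fin n)) : Set (PElt n) :=
  insert d {b | IsThetaCover d θ b}

/-- `u_θ`: the number of upper-return blocks among the edges of `θ`. -/
noncomputable def uRet {n : ℕ} (a : PElt n) (θ : Set (Fin n)) : ℕ :=
  Nat.card {p : Fin n × Fin n // p.1 ∈ θ ∧ p.2 ∈ θ ∧ UpperReturn a p.1 p.2}

/-- `l_θ`: the number of lower-return blocks among the edges of `θ`. -/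
noncomputable def lRet {n : ℕ} (a : PElt n) (θ : Set (Fin n)) : ℕ :=
  Nat.card {p : Fin n × Fin n // p.1 ∈ θ ∧ p.2 ∈ θ ∧ LowerReturn a p.1 p.2}

/-! ### Twisted semigroup algebras -/

variable {K : Type} [Field K]

/-- The underlying vector space of the semigroup algebra `k[P_n]`. -/
abbrev PAlg (n : ℕ) (K : Type) [Field K] := PElt n →₀ K

/-- The twisted multiplication on `k[P_n]`: on basis elements,
`a ∘ b = ξ^{m(a,b)} · (ab)`, extended bilinearly. -/
noncomputable def twistMul {n : ℕ} (ξ : K) (f g : PAlg n K) : PAlg n K :=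
  f.sum fun a ca => g.sum fun b cb =>
    Finsupp.single (pmul a b) (ca * cb * ξ ^ floatCount a b)

/-- The twisted variant `S^ξ`: the subsemigroup of `(k[S], ∘)` generated by (the basis
elements corresponding to) `S`. -/
def TwistedVariant {n : ℕ} (ξ : K) (S : Set (PElt n)) : Set (PAlg n K) :=
  ⋂₀ {T : Set (PAlg n K) | (∀ a ∈ S, Finsupp.single a (1 : K) ∈ T) ∧
      ∀ f ∈ T, ∀ g ∈ T, twistMul ξ f g ∈ T}

/-- The idempotents of a set of elements of the twisted algebra. -/
def EsetTwist {n : ℕ} (ξ : K) (X : Set (PAlg n K)) : Set (PAlg n K) :=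
  {f ∈ X | twistMul ξ f f = f}

/-- `⟨S^ξ, ξ·1⟩ = {ξ^i·α : i ∈ ℕ, α ∈ S}`. -/
def TwistNat {n : ℕ} (ξ : K) (S : Set (PElt n)) : Set (PAlg n K) :=
  {f | ∃ (i : ℕ), ∃ a ∈ S, f = Finsupp.single a (ξ ^ i)}

/-- `⟨S^ξ, ξ·1, ξ⁻¹·1⟩ = {ξ^i·α : i ∈ ℤ, α ∈ S}`. -/
def TwistInt {n : ℕ} (ξ : K) (S : Set (PElt n)) : Set (PAlg n K) :=
  {f | ∃ (i : ℤ), ∃ a ∈ S, f = Finsupp.single a (ξ ^ i)}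

/-! ### Idempotent statistics of the Jones monoid -/

/-- The number of cycle components of `Γ(a)`. -/
noncomputable def numCycles {n : ℕ} (a : PElt n) : ℕ :=
  Nat.card {θ : Set (Fin n) // IsCycleComp a θ}

/-- The number of path components of `Γ(a)`. -/
noncomputable def numPaths {n : ℕ} (a : PElt n) : ℕ :=
  Nat.card {θ : Set (Fin n) // IsPathComp a θ}

/-- `E_{n;c,p}`: the idempotents of the Jones monoid `J_n` with `c` cycle components and
`p` path components (out-of-range indices give the empty set). -/
def EJcp (n : ℕ) (c p : ℤ) : Set (PElt n) :=
  {a ∈ Jones n | pmul a a = a ∧ (numCycles a : ℤ) = c ∧ (numPaths a : ℤ) = p}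

/-- `e_{n;c,p} = |E_{n;c,p}|`. -/
noncomputable def eJ (n : ℕ) (c p : ℤ) : ℕ := Nat.card (EJcp n c p)

/-- `e_{n;·,p} = Σ_c e_{n;c,p}`: the number of idempotents of `J_n` of rank `p`. -/
noncomputable def eJdot (n : ℕ) (p : ℤ) : ℕ :=
  Nat.card {a : PElt n | a ∈ Jones n ∧ pmul a a = a ∧ (numPaths a : ℤ) = p}

/-- `S^{(1)}_{n;c,p} = Σ_{α ∈ E_{n;c,p}} Σ_{θ ∈ Θ(α)} (u_θ + l_θ)`. -/
noncomputable def S1 (n : ℕ) (c p : ℤ) : ℕ :=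
  ∑ᶠ a ∈ EJcp n c p, ∑ᶠ θ ∈ ThetaSet a, (uRet a θ + lRet a θ)

/-- `S^{(2)}_{n;c,p} = Σ_{α ∈ E_{n;c,p}} Σ_{θ₁ ≠ θ₂ ∈ Θ(α)} u_{θ₁}·l_{θ₂}`
(the inner sum over ordered pairs of distinct cycles). -/
noncomputable def S2 (n : ℕ) (c p : ℤ) : ℕ :=
  ∑ᶠ a ∈ EJcp n c p, ∑ᶠ q ∈ {q : Set (Fin n) × Set (Fin n) |
      q.1 ∈ ThetaSet a ∧ q.2 ∈ ThetaSet a ∧ q.1 ≠ q.2}, uRet a q.1 * lRet a q.2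

/-- `S^{(1)}_{n;·,p}`. -/
noncomputable def S1dot (n : ℕ) (p : ℤ) : ℕ :=
  ∑ᶠ a ∈ {a : PElt n | a ∈ Jones n ∧ pmul a a = a ∧ (numPaths a : ℤ) = p},
    ∑ᶠ θ ∈ ThetaSet a, (uRet a θ + lRet a θ)

/-- `S^{(2)}_{n;·,p}`. -/
noncomputable def S2dot (n : ℕ) (p : ℤ) : ℕ :=
  ∑ᶠ a ∈ {a : PElt n | a ∈ Jones n ∧ pmul a a = a ∧ (numPaths a : ℤ) = p},
    ∑ᶠ q ∈ {q : Set (Fin n) × Set (Fin n) |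
      q.1 ∈ ThetaSet a ∧ q.2 ∈ ThetaSet a ∧ q.1 ≠ q.2}, uRet a q.1 * lRet a q.2

/-! ### Auxiliary material for the proof -/

/-- Merge the classes of `x` and `y` in the equivalence relation `r`. -/
def mergeSetoid {V : Type} (r : Setoid V) (x y : V) : Setoid V where
  r u v := r.r u v ∨ (r.r u x ∧ r.r y v) ∨ (r.r u y ∧ r.r x v)
  iseqv := by
    have hs : ∀ {u v}, r.r u v → r.r v u := fun h => r.iseqv.symm h
    have ht : ∀ {u v w}, r.r u v → r.r v w → r.r u w := fun h h_b => r.iseqv.trans h h_b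
    refine ⟨fun u => Or.inl (r.iseqv.refl u), ?_, ?_⟩
    · rintro u v (h | ⟨h, h_b⟩ | ⟨h, h_b⟩)
      · exact Or.inl (hs h)
      · exact Or.inr (Or.inr ⟨hs h_b, hs h⟩)
      · exact Or.inr (Or.inl ⟨hs h_b, hs h⟩)
    · rintro u v w (h | ⟨h, h_b⟩ | ⟨h, h_b⟩) (k | ⟨k, k_b⟩ | ⟨k, k_b⟩)
      · exact Or.inl (ht h k)
      · exact Or.inr (Or.inl ⟨ht h k, k_b⟩)
      · exact Or.inr (Or.inr ⟨ht h k, k_b⟩)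
      · exact Or.inr (Or.inl ⟨h, ht h_b k⟩)
      · exact Or.inr (Or.inl ⟨h, k_b⟩)
      · exact Or.inl (ht h k_b)
      · exact Or.inr (Or.inr ⟨h, ht h_b k⟩)
      · exact Or.inl (ht h k_b)
      · exact Or.inr (Or.inr ⟨h, k_b⟩)

/-- Non-crossing on the set `S` with respect to positions `f`. -/
def NCOn {V : Type} (f : V → ℕ) (S : Set V) (r : Setoid V) : Prop :=
  ∀ a ∈ S, ∀ b ∈ S, ∀ c ∈ S, ∀ d ∈ S, f a < f b → f b < f c → f c < f d →
    r.r a c → r.r b d → r.r a b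

/-- All blocks have at most two elements in `S`. -/
def SmallOn {V : Type} (S : Set V) (r : Setoid V) : Prop :=
  ∀ a ∈ S, ∀ b ∈ S, ∀ c ∈ S, r.r a b → r.r a c → a = b ∨ a = c ∨ b = c

theorem ncOn_merge {V : Type} (f : V → ℕ) (hf : Function.Injective f) (S : Set V)
    (r : Setoid V) (h : NCOn f S r) (x y : V) (hx : x ∈ S) (hy : y ∈ S) (hxy : f x < f y)
    (hadj : ∀ v ∈ S, f x < f v → f v < f y → False) : NCOn f S (mergeSetoid r x y) := by
  have hs : ∀ {u v}, r.r u v → r.r v u := fun h => r.iseqv.symm h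
  have ht : ∀ {u v w}, r.r u v → r.r v w → r.r u w := fun h h_b => r.iseqv.trans h h_b
  have pos : ∀ v ∈ S, f v < f x ∨ v = x ∨ v = y ∨ f y < f v := by
    intro v hv
    rcases lt_trichotomy (f v) (f x) with h1 | h1 | h1
    · exact Or.inl h1
    · exact Or.inr (Or.inl (hf h1))
    · rcases lt_trichotomy (f v) (f y) with h2 | h2 | h2
      · exact (hadj v hv h1 h2).elim
      · exact Or.inr (Or.inr (Or.inl (hf h2)))
      · exact Or.inr (Or.inr (Or.inr h2))
  intro a ha b hb c hc d hd hab hbc hcd hac hbd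
  have pa := pos a ha
  have pb := pos b hb
  have pc := pos c hc
  have pd := pos d hd
  have rr : ∀ u, r.r u u := fun u => r.iseqv.refl u
  unfold NCOn at h
  change r.r a b ∨ (r.r a x ∧ r.r y b) ∨ (r.r a y ∧ r.r x b)
  rcases hac with hac | ⟨h1, h2⟩ | ⟨h1, h2⟩ <;> rcases hbd with hbd | ⟨h3, h4⟩ | ⟨h3, h4⟩
  · exact Or.inl (h a ha b hb c hc d hd hab hbc hcd hac hbd)
  · have q1 := h x hx a ha b hb c hc
    have q2 := h a ha b hb c hc x hx
    have q3 := h a ha y hy c hc d hd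
    clear h pos hadj
    grind
  · have q1 := h y hy a ha b hb c hc
    have q2 := h a ha b hb c hc y hy
    have q3 := h a ha x hx c hc d hd
    clear h pos hadj
    grind
  · have q1 := h y hy b hb c hc d hd
    have q2 := h a ha b hb x hx d hd
    have q3 := h b hb c hc d hd y hy
    clear h pos hadj
    grind
  · exact Or.inl (ht h1 (hs h3))
  · exact Or.inr (Or.inl ⟨h1, hs h3⟩)
  · have q1 := h x hx b hb c hc d hd
    have q2 := h a ha b hb y hy d hd
    have q3 := h b hb c hc d hd x hx
    clear h pos hadj
    grind
  · exact Or.inr (Or.inr ⟨h1, hs h3⟩)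
  · exact Or.inl (ht h1 (hs h3))

theorem smallOn_merge {V : Type} (S : Set V) (r : Setoid V) (h : SmallOn S r) (x y : V)
    (hx : x ∈ S) (hy : y ∈ S) (hxy : x ≠ y) :
    SmallOn {v ∈ S | v ≠ x ∧ v ≠ y} (mergeSetoid r x y) := by
  have hs : ∀ {u v}, r.r u v → r.r v u := fun h => r.iseqv.symm h
  have ht : ∀ {u v w}, r.r u v → r.r v w → r.r u w := fun h h_b => r.iseqv.trans h h_b
  rintro a ⟨ha, hax, hay⟩ b ⟨hb, hbx, hby⟩ c ⟨hc, hcx, hcy⟩ hab hac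
  have key : ∀ z ∈ S, ∀ u ∈ S, ∀ v ∈ S, u ≠ z → v ≠ z → r.r z u → r.r z v → u = v := by
    intro z hz u hu v hv huz hvz h1 h2
    rcases h z hz u hu v hv h1 h2 with h3 | h3 | h3
    · exact (huz h3.symm).elim
    · exact (hvz h3.symm).elim
    · exact h3
  rcases hab with h1 | ⟨h1, h2⟩ | ⟨h1, h2⟩ <;> rcases hac with k1 | ⟨k1, k2⟩ | ⟨k1, k2⟩
  · exact h a ha b hb c hc h1 k1
  · exact Or.inl (key x hx a ha b hb hax hbx (hs k1) (ht (hs k1) h1))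
  · exact Or.inl (key y hy a ha b hb hay hby (hs k1) (ht (hs k1) h1))
  · exact Or.inr (Or.inl (key x hx a ha c hc hax hcx (hs h1) (ht (hs h1) k1)))
  · exact Or.inr (Or.inr (key y hy b hb c hc hby hcy h2 k2))
  · exact Or.inr (Or.inl (key x hx a ha c hc hax hcx (hs h1) k2))
  · exact Or.inr (Or.inl (key y hy a ha c hc hay hcy (hs h1) (ht (hs h1) k1)))
  · exact Or.inl (key x hx a ha b hb hax hbx (hs k1) h2)
  · exact Or.inr (Or.inr (key x hx b hb c hc hbx hcx h2 k2))

/-- Points not among the first `k` pairs. -/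
def aliveSet {V : Type} {n : ℕ} (x y : Fin n → V) (k : ℕ) : Set V :=
  {v | ∀ i : Fin n, i.val < k → v ≠ x i ∧ v ≠ y i}

theorem aliveSet_succ {V : Type} {n : ℕ} (x y : Fin n → V) (k : ℕ) (hk : k < n) :
    aliveSet x y (k + 1) = {v ∈ aliveSet x y k | v ≠ x ⟨k, hk⟩ ∧ v ≠ y ⟨k, hk⟩} := by
  ext v
  constructor
  · intro h
    exact ⟨fun i hi => h i (by omega), h ⟨k, hk⟩ (by simp)⟩
  · rintro ⟨h1, h2⟩ i hi
    by_cases hik : i.val < k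
    · exact h1 i hik
    · have : i = ⟨k, hk⟩ := Fin.ext (by simp; omega)
      rw [this]; exact h2

theorem merge_mem {V : Type} {n : ℕ} (r : Setoid V) (x y : Fin n → V)
    (P : Set V → Setoid V → Prop) (h0 : P (aliveSet x y 0) r)
    (hstep : ∀ (k : ℕ) (hk : k < n) (R : Setoid V), P (aliveSet x y k) R →
      P (aliveSet x y (k + 1)) (mergeSetoid R (x ⟨k, hk⟩) (y ⟨k, hk⟩))) :
    ∀ k ≤ n, ∃ R : Setoid V, (∀ u v, r.r u v → R.r u v) ∧
      (∀ i : Fin n, i.val < k → R.r (x i) (y i)) ∧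
      (∀ T : Setoid V, (∀ u v, r.r u v → T.r u v) → (∀ i, T.r (x i) (y i)) →
        ∀ u v, R.r u v → T.r u v) ∧ P (aliveSet x y k) R := by
  intro k
  induction k with
  | zero =>
    intro _
    exact ⟨r, fun _ _ h => h, fun i hi => absurd hi (by omega), fun T h _ => h, h0⟩
  | succ k ih =>
    intro hk
    obtain ⟨R, h1, h2, h3, h4⟩ := ih (by omega)
    refine ⟨mergeSetoid R (x ⟨k, hk⟩) (y ⟨k, hk⟩), fun u v h => Or.inl (h1 u v h), ?_, ?_,
      hstep k hk R h4⟩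
    · intro i hi
      by_cases hik : i.val < k
      · exact Or.inl (h2 i hik)
      · have : i = ⟨k, hk⟩ := Fin.ext (by simp; omega)
        rw [this]
        exact Or.inr (Or.inl ⟨R.iseqv.refl _, R.iseqv.refl _⟩)
    · intro T hT1 hT2 u v huv
      rcases huv with h | ⟨h, h_b⟩ | ⟨h, h_b⟩
      · exact h3 T hT1 hT2 u v h
      · exact T.iseqv.trans (h3 T hT1 hT2 _ _ h)
          (T.iseqv.trans (hT2 _) (h3 T hT1 hT2 _ _ h_b))
      · exact T.iseqv.trans (h3 T hT1 hT2 _ _ h)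
          (T.iseqv.trans (T.iseqv.symm (hT2 _)) (h3 T hT1 hT2 _ _ h_b))

/-- Disjoint union of two partitions. -/
def sumSetoid {n : ℕ} (a b : PElt n) : Setoid (PV n ⊕ PV n) where
  r u v := (∃ p q, u = .inl p ∧ v = .inl q ∧ a.r p q) ∨
    (∃ p q, u = .inr p ∧ v = .inr q ∧ b.r p q)
  iseqv := by
    refine ⟨?_, ?_, ?_⟩
    · rintro (p | p)
      · exact Or.inl ⟨p, p, rfl, rfl, a.iseqv.refl p⟩
      · exact Or.inr ⟨p, p, rfl, rfl, b.iseqv.refl p⟩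
    · rintro u v (⟨p, q, rfl, rfl, h⟩ | ⟨p, q, rfl, rfl, h⟩)
      · exact Or.inl ⟨q, p, rfl, rfl, a.iseqv.symm h⟩
      · exact Or.inr ⟨q, p, rfl, rfl, b.iseqv.symm h⟩
    · rintro u v w (⟨p, q, rfl, rfl, h⟩ | ⟨p, q, rfl, rfl, h⟩)
        (⟨p_b, q_b, h1, rfl, h_b⟩ | ⟨p_b, q_b, h1, rfl, h_b⟩)
      · cases h1; exact Or.inl ⟨p, q_b, rfl, rfl, a.iseqv.trans h h_b⟩
      · cases h1
      · cases h1
      · cases h1; exact Or.inr ⟨p, q_b, rfl, rfl, b.iseqv.trans h h_b⟩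

/-- A lift of the three layers to the disjoint union of the vertices of the factors. -/
def layerLift {n : ℕ} : TV n → PV n ⊕ PV n
  | .inl i => .inl (.inl i)
  | .inr (.inl i) => .inl (.inr i)
  | .inr (.inr i) => .inr (.inr i)

theorem stack_lift {n : ℕ} (a b : PElt n) (R : Setoid (PV n ⊕ PV n))
    (h1 : ∀ u v, (sumSetoid a b).r u v → R.r u v)
    (h2 : ∀ i : Fin n, R.r (.inl (.inr i)) (.inr (.inl i))) (s t : TV n)
    (h : (stackSetoid a b).r s t) : R.r (layerLift s) (layerLift t) := by
  have hup : ∀ p : PV n, layerLift (upEmb p) = .inl p := by rintro (p | p) <;> rfl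
  have hdn : ∀ p : PV n, R.r (layerLift (downEmb p)) (.inr p) := by
    rintro (p | p)
    · exact h2 p
    · exact R.iseqv.refl _
  change EqvGen (stackRel a b) s t at h
  induction h with
  | rel s t h =>
    rcases h with ⟨p, q, h, rfl, rfl⟩ | ⟨p, q, h, rfl, rfl⟩
    · rw [hup, hup]; exact h1 _ _ (Or.inl ⟨p, q, rfl, rfl, h⟩)
    · exact R.iseqv.trans (hdn p) (R.iseqv.trans (h1 _ _ (Or.inr ⟨p, q, rfl, rfl, h⟩))
        (R.iseqv.symm (hdn q)))
  | refl s => exact R.iseqv.refl _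
  | symm s t _ ih => exact R.iseqv.symm ih
  | trans s t u _ _ ih1 ih2 => exact R.iseqv.trans ih1 ih2

/-- Position of the vertices of the two factors on a line. -/
def linePos (n : ℕ) : PV n ⊕ PV n → ℕ
  | .inl p => ordIdx n p
  | .inr p => 2 * n + ordIdx n p

theorem ordIdx_lt {n : ℕ} (p : PV n) : ordIdx n p < 2 * n := by
  rcases p with p | p <;> have := p.isLt <;> simp only [ordIdx] <;> omega

theorem ordIdx_inj {n : ℕ} : Function.Injective (ordIdx n) := by
  rintro (p | p) (q | q) h <;> have := p.isLt <;> have := q.isLt <;>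
    simp only [ordIdx] at h
  · rw [Fin.ext h]
  · omega
  · omega
  · rw [Fin.ext (show p.val = q.val by omega)]

theorem linePos_inj {n : ℕ} : Function.Injective (linePos n) := by
  rintro (p | p) (q | q) h <;> have := ordIdx_lt p <;> have := ordIdx_lt q <;>
    simp only [linePos] at h
  · rw [ordIdx_inj h]
  · omega
  · omega
  · rw [ordIdx_inj (show ordIdx n p = ordIdx n q by omega)]

theorem linePos_out {n : ℕ} (p : PV n) :
    linePos n (layerLift (outEmb p)) = ordIdx n p ∧ p.isLeft ∨
    linePos n (layerLift (outEmb p)) = 2 * n + ordIdx n p ∧ p.isRight := by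
  rcases p with p | p
  · left; exact ⟨rfl, rfl⟩
  · right; exact ⟨rfl, rfl⟩

theorem linePos_out_mono {n : ℕ} (p q : PV n) (h : ordIdx n p < ordIdx n q) :
    linePos n (layerLift (outEmb p)) < linePos n (layerLift (outEmb q)) := by
  rcases p with p | p <;> rcases q with q | q <;>
    simp only [outEmb, layerLift, linePos, ordIdx] at h ⊢ <;>
    have := p.isLt <;> have := q.isLt <;> omega

theorem out_alive {n : ℕ} (p : PV n) (k : ℕ) : layerLift (outEmb p) ∈
    aliveSet (fun i : Fin n => (.inl (.inr i) : PV n ⊕ PV n)) (fun i => .inr (.inl i)) k := by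
  intro i _
  rcases p with p | p <;> simp [outEmb, layerLift]

theorem sum_ncOn {n : ℕ} (a b : PElt n) (ha : IsPlanar a) (hb : IsPlanar b) (S : Set _) :
    NCOn (linePos n) S (sumSetoid a b) := by
  intro w _ x _ y _ z _ hwx hxy hyz h1 h2
  rcases h1 with ⟨p, q, rfl, rfl, h1⟩ | ⟨p, q, rfl, rfl, h1⟩ <;>
  rcases h2 with ⟨p_b, q_b, rfl, rfl, h2⟩ | ⟨p_b, q_b, rfl, rfl, h2⟩ <;>
  have := ordIdx_lt p <;> have := ordIdx_lt q <;> have := ordIdx_lt p_b <;>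
  have := ordIdx_lt q_b <;> simp only [linePos] at hwx hxy hyz
  · refine Or.inl ⟨p, p_b, rfl, rfl, ?_⟩
    by_contra hc
    exact ha ⟨p, p_b, q, q_b, hwx, hxy, hyz, h1, h2, hc⟩
  · omega
  · omega
  · refine Or.inr ⟨p, p_b, rfl, rfl, ?_⟩
    by_contra hc
    exact hb ⟨p, p_b, q, q_b, by omega, by omega, by omega, h1, h2, hc⟩

/-- The projection of the disjoint union onto the three layers. -/
def layerProj {n : ℕ} : PV n ⊕ PV n → TV n
  | .inl p => upEmb p
  | .inr p => downEmb p

theorem pmul_planar {n : ℕ} (a b : PElt n) (ha : IsPlanar a) (hb : IsPlanar b) :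
    IsPlanar (pmul a b) := by
  obtain ⟨R, h1, h2, h3, h4⟩ := merge_mem (sumSetoid a b)
    (fun i : Fin n => (.inl (.inr i) : PV n ⊕ PV n)) (fun i => .inr (.inl i))
    (fun S r => NCOn (linePos n) S r) (sum_ncOn a b ha hb _)
    (by
      intro k hk R hR
      have key := ncOn_merge (linePos n) linePos_inj _ R hR (.inl (.inr ⟨k, hk⟩))
        (.inr (.inl ⟨k, hk⟩)) (by
          intro i hi; constructor
          · intro h; cases h; simp at hi
          · intro h; cases h)
        (by
          intro i hi; constructor
          · intro h; cases h
          · intro h; cases h; simp at hi)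
        (by simp only [linePos, ordIdx]; omega)
        (by
          intro v hv hv1 hv2
          rcases v with (v | v) | (v | v) <;> have := v.isLt <;>
            simp only [linePos, ordIdx] at hv1 hv2
          · omega
          · exact (hv v (by omega)).1 rfl
          · exact (hv v (by omega)).2 rfl
          · omega)
      rw [aliveSet_succ _ _ k hk]
      intro a ha b hb c hc d hd
      exact key a ha.1 b hb.1 c hc.1 d hd.1) n le_rfl
  have hl := stack_lift a b R h1 (fun i => h2 i i.isLt)
  have hp := h3 (Setoid.comap layerProj (stackSetoid a b))
    (by
      rintro u v (⟨p, q, rfl, rfl, h⟩ | ⟨p, q, rfl, rfl, h⟩)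
      · exact EqvGen.rel _ _ (Or.inl ⟨p, q, h, rfl, rfl⟩)
      · exact EqvGen.rel _ _ (Or.inr ⟨p, q, h, rfl, rfl⟩))
    (fun i => EqvGen.refl _)
  have hpo : ∀ p : PV n, layerProj (layerLift (outEmb p)) = outEmb p := by
    rintro (p | p) <;> rfl
  rintro ⟨w, x, y, z, hwx, hxy, hyz, hwy, hxz, hn⟩
  apply hn
  have := hp _ _ (h4 _ (out_alive w n) _ (out_alive x n) _ (out_alive y n) _ (out_alive z n)
    (linePos_out_mono _ _ hwx) (linePos_out_mono _ _ hxy) (linePos_out_mono _ _ hyz)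
    (hl _ _ hwy) (hl _ _ hxz))
  change (stackSetoid a b).r (layerProj _) (layerProj _) at this
  rw [hpo, hpo] at this
  exact this

theorem blockCard_le_two {n : ℕ} (a : PElt n) (x : PV n) : blockCard a x ≤ 2 ↔
    ∀ y z, a.r x y → a.r x z → x = y ∨ x = z ∨ y = z := by
  have e : blockCard a x = Set.ncard {y | a.r x y} := rfl
  rw [e, ← not_lt, Set.two_lt_ncard_iff]
  have hr : a.r x x := a.iseqv.refl x
  constructor
  · intro h y z hy hz
    by_contra! hc
    exact h ⟨x, y, z, hr, hy, hz, hc.1, hc.2.1, hc.2.2⟩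
  · rintro h ⟨u, v, w, hu, hv, hw, huv, huw, hvw⟩
    have h1 := h u v hu hv
    have h2 := h u w hu hw
    have h3 := h v w hv hw
    grind

theorem blockCard_eq_two {n : ℕ} (a : PElt n) (x : PV n) (h : blockCard a x ≤ 2)
    (hx : ∃ y, a.r x y ∧ y ≠ x) : blockCard a x = 2 := by
  obtain ⟨y, hy, hyx⟩ := hx
  have e : blockCard a x = Set.ncard {y | a.r x y} := rfl
  have : 1 < Set.ncard {y | a.r x y} :=
    (Set.one_lt_ncard_iff).2 ⟨x, y, a.iseqv.refl x, hy, hyx.symm⟩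
  omega

theorem sum_small {n : ℕ} (a b : PElt n) (ha : ∀ x, blockCard a x ≤ 2)
    (hb : ∀ x, blockCard b x ≤ 2) : SmallOn Set.univ (sumSetoid a b) := by
  rintro u _ v _ w _ (⟨p, q, rfl, rfl, h⟩ | ⟨p, q, rfl, rfl, h⟩)
    (⟨p_b, q_b, h1, rfl, h_b⟩ | ⟨p_b, q_b, h1, rfl, h_b⟩) <;> cases h1
  · simpa using (blockCard_le_two a p).1 (ha p) q q_b h h_b
  · simpa using (blockCard_le_two b p).1 (hb p) q q_b h h_b

/-- The small-block property survives contracting pairs of points. -/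
theorem small_contract {V : Type} {n : ℕ} (r : Setoid V) (hr : SmallOn Set.univ r)
    (x y : Fin n → V) (hx : Function.Injective x) (hy : Function.Injective y)
    (hxy : ∀ i j, x i ≠ y j) :
    ∃ R : Setoid V, (∀ u v, r.r u v → R.r u v) ∧ (∀ i : Fin n, R.r (x i) (y i)) ∧
      SmallOn {v | ∀ i, v ≠ x i ∧ v ≠ y i} R := by
  obtain ⟨R, h1, h2, _, h4⟩ := merge_mem r x y SmallOn
    (fun a _ b _ c _ => hr a trivial b trivial c trivial)
    (by
      intro k hk R hR
      rw [aliveSet_succ _ _ k hk]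
      refine smallOn_merge _ R hR _ _ ?_ ?_ (hxy _ _)
      · intro i hi
        refine ⟨fun h => ?_, hxy _ _⟩
        have := hx h; subst this; simp at hi
      · intro i hi
        refine ⟨(hxy _ _).symm, fun h => ?_⟩
        have := hy h; subst this; simp at hi) n le_rfl
  exact ⟨R, h1, fun i => h2 i i.isLt,
    fun a ha b hb c hc => h4 a (fun i _ => ha i) b (fun i _ => hb i) c (fun i _ => hc i)⟩

theorem layerLift_out_inj {n : ℕ} (p q : PV n)
    (h : layerLift (outEmb p) = layerLift (outEmb q)) : p = q := by
  rcases p with p | p <;> rcases q with q | q <;> simp_all [outEmb, layerLift]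

theorem pmul_small {n : ℕ} (a b : PElt n) (ha : ∀ x, blockCard a x ≤ 2)
    (hb : ∀ x, blockCard b x ≤ 2) (x : PV n) : blockCard (pmul a b) x ≤ 2 := by
  obtain ⟨R, h1, h2, h4⟩ := small_contract (sumSetoid a b) (sum_small a b ha hb)
    (fun i : Fin n => (.inl (.inr i) : PV n ⊕ PV n)) (fun i => .inr (.inl i))
    (fun i j h => by simpa using h) (fun i j h => by simpa using h) (fun i j h => by cases h)
  have hl := stack_lift a b R h1 h2
  have hal : ∀ p : PV n, ∀ i : Fin n, layerLift (outEmb p) ≠ (.inl (.inr i) : PV n ⊕ PV n) ∧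
      layerLift (outEmb p) ≠ (.inr (.inl i) : PV n ⊕ PV n) :=
    fun p i => out_alive p n i i.isLt
  rw [blockCard_le_two]
  intro y z hy hz
  rcases h4 _ (hal x) _ (hal y) _ (hal z) (hl _ _ hy) (hl _ _ hz) with h | h | h
  · exact Or.inl (layerLift_out_inj _ _ h)
  · exact Or.inr (Or.inl (layerLift_out_inj _ _ h))
  · exact Or.inr (Or.inr (layerLift_out_inj _ _ h))

theorem motzkin_mul {n : ℕ} (a b : PElt n) (ha : a ∈ Motzkin n) (hb : b ∈ Motzkin n) :
    pmul a b ∈ Motzkin n :=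
  ⟨pmul_planar a b ha.1 hb.1, pmul_small a b ha.2 hb.2⟩

/-- Attach a phantom point `none` to a singleton block `{s}`. -/
def phantom {V : Type} (r : Setoid V) (s : V) : Setoid (Option V) :=
  Setoid.comap (fun o : Option V => o.getD s) r

theorem phantom_small {V : Type} (r : Setoid V) (s : V) (hr : SmallOn Set.univ r)
    (hs : ∀ v, r.r s v → v = s) : SmallOn Set.univ (phantom r s) := by
  have hs_b : ∀ v, r.r v s → v = s := fun v h => hs v (r.iseqv.symm h)
  rintro (_ | a) _ (_ | b) _ (_ | c) _ h1 h2
  · simp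
  · simp
  · simp
  · have := hs _ h1; have := hs _ h2; simp_all
  · simp
  · have e : a = s := hs_b _ h1; subst e; have e2 : c = a := hs _ h2; simp [e2]
  · have e : a = s := hs_b _ h2; subst e; have e2 : b = a := hs _ h1; simp [e2]
  · simpa using hr a trivial b trivial c trivial h1 h2

/-- A component of the stacked graph containing a middle vertex that is a singleton in one of the
factors contains at most one outer vertex. -/
theorem dead_end {n : ℕ} (a b : PElt n) (ha : ∀ x, blockCard a x ≤ 2)
    (hb : ∀ x, blockCard b x ≤ 2) (i : Fin n)
    (hi : (∀ v, a.r (.inr i) v → v = .inr i) ∨ (∀ v, b.r (.inl i) v → v = .inl i))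
    (p q : PV n) (hp : (stackSetoid a b).r (.inr (.inl i)) (outEmb p))
    (hq : (stackSetoid a b).r (.inr (.inl i)) (outEmb q)) : p = q := by
  obtain ⟨s, hs0, hs⟩ : ∃ s : PV n ⊕ PV n, (s = .inl (.inr i) ∨ s = .inr (.inl i)) ∧
      ∀ v, (sumSetoid a b).r s v → v = s := by
    rcases hi with hi | hi
    · refine ⟨_, Or.inl rfl, ?_⟩
      rintro v (⟨p, q, h, rfl, h_b⟩ | ⟨p, q, h, rfl, h_b⟩) <;> cases h
      rw [hi _ h_b]
    · refine ⟨_, Or.inr rfl, ?_⟩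
      rintro v (⟨p, q, h, rfl, h_b⟩ | ⟨p, q, h, rfl, h_b⟩) <;> cases h
      rw [hi _ h_b]
  obtain ⟨R, h1, h2, h4⟩ := small_contract (phantom (sumSetoid a b) s)
    (phantom_small _ s (sum_small a b ha hb) hs)
    (fun i : Fin n => (some (.inl (.inr i)) : Option (PV n ⊕ PV n)))
    (fun i => some (.inr (.inl i)))
    (fun i j h => by simpa using h) (fun i j h => by simpa using h) (fun i j h => by cases h)
  have hl := stack_lift a b (Setoid.comap some R) (fun u v h => h1 _ _ h) h2
  have hn : R.r none (some s) := h1 _ _ ((sumSetoid a b).iseqv.refl s)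
  have hm : R.r none (some (.inl (.inr i))) := by
    rcases hs0 with rfl | rfl
    · exact hn
    · exact R.iseqv.trans hn (R.iseqv.symm (h2 i))
  have hal : ∀ p : PV n, ∀ i : Fin n,
      some (layerLift (outEmb p)) ≠ (some (.inl (.inr i)) : Option (PV n ⊕ PV n)) ∧
      some (layerLift (outEmb p)) ≠ (some (.inr (.inl i)) : Option (PV n ⊕ PV n)) := by
    intro p i
    have := out_alive p n i i.isLt
    exact ⟨fun h => this.1 (Option.some.inj h), fun h => this.2 (Option.some.inj h)⟩
  rcases h4 none (fun i => ⟨by simp, by simp⟩) _ (hal p) _ (hal q)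
    (R.iseqv.trans hm (hl _ _ hp)) (R.iseqv.trans hm (hl _ _ hq)) with h | h | h
  · cases h
  · cases h
  · exact layerLift_out_inj _ _ (Option.some.inj h)

theorem outer_singleton {n : ℕ} (a b : PElt n) (p : PV n)
    (ha : ∀ j, p = .inl j → ∀ v, a.r p v → v = p)
    (hb : ∀ j, p = .inr j → ∀ v, b.r p v → v = p) (s t : TV n)
    (h : (stackSetoid a b).r s t) : s = outEmb p ↔ t = outEmb p := by
  change EqvGen (stackRel a b) s t at h
  induction h with
  | rel s t h =>
    have ha_b : ∀ j, p = .inl j → ∀ v, a.r v p → v = p :=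
      fun j hj v hv => ha j hj v (a.iseqv.symm hv)
    have hb_b : ∀ j, p = .inr j → ∀ v, b.r v p → v = p :=
      fun j hj v hv => hb j hj v (b.iseqv.symm hv)
    rcases h with ⟨u, v, h, rfl, rfl⟩ | ⟨u, v, h, rfl, rfl⟩ <;>
    rcases p with p | p
    · have e : ∀ w : PV n, upEmb w = outEmb (.inl p) ↔ w = .inl p := by
        rintro (w | w) <;> simp [upEmb, outEmb]
      rw [e, e]
      constructor
      · rintro rfl; exact ha p rfl v h
      · rintro rfl; exact ha_b p rfl u h
    · have e : ∀ w : PV n, upEmb w ≠ outEmb (.inr p) := by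
        rintro (w | w) <;> simp [upEmb, outEmb]
      simp [e]
    · have e : ∀ w : PV n, downEmb w ≠ outEmb (.inl p) := by
        rintro (w | w) <;> simp [downEmb, outEmb]
      simp [e]
    · have e : ∀ w : PV n, downEmb w = outEmb (.inr p) ↔ w = .inr p := by
        rintro (w | w) <;> simp [downEmb, outEmb]
      rw [e, e]
      constructor
      · rintro rfl; exact hb p rfl v h
      · rintro rfl; exact hb_b p rfl u h
  | refl s => exact Iff.rfl
  | symm s t _ ih => exact ih.symm
  | trans s t u _ _ ih1 ih2 => exact ih1.trans ih2

theorem idem_jones {n : ℕ} (a : PElt n) (ha : a ∈ Motzkin n) (hid : pmul a a = a)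
    (hm : floatCount a a = 0) : a ∈ Jones n := by
  have main : ∀ i : Fin n,
      ¬ ((∀ v, a.r (.inr i) v → v = .inr i) ∨ (∀ v, a.r (.inl i) v → v = .inl i)) := by
    intro i hi
    have hex : ∃ p : PV n, (stackSetoid a a).r (.inr (.inl i)) (outEmb p) := by
      by_contra hno
      push Not at hno
      unfold floatCount at hm
      rw [Nat.card_eq_zero] at hm
      rcases hm with hm | hm
      · refine hm.false ⟨Quotient.mk (stackSetoid a a) (.inr (.inl i)), ?_⟩
        rintro (x | x | x) hx
        · exact (hno (.inl x) ((stackSetoid a a).iseqv.symm (Quotient.exact hx))).elim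
        · trivial
        · exact (hno (.inr x) ((stackSetoid a a).iseqv.symm (Quotient.exact hx))).elim
      · exact (not_finite_iff_infinite.2 hm) inferInstance
    obtain ⟨p, hp⟩ := hex
    have hsing : ∀ v, a.r p v → v = p := by
      intro v hv
      rw [← hid] at hv
      exact dead_end a a ha.2 ha.2 i hi v p ((stackSetoid a a).iseqv.trans hp hv) hp
    have := (outer_singleton a a p (fun _ _ => hsing) (fun _ _ => hsing) _ _ hp).2 rfl
    rcases p with p | p <;> simp [outEmb] at this
  refine ⟨ha.1, fun x => blockCard_eq_two a x (ha.2 x) ?_⟩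
  by_contra! hc
  rcases x with i | i
  · exact main i (Or.inr hc)
  · exact main i (Or.inl hc)

theorem twistMul_single {n : ℕ} (ξ : K) (a b : PElt n) (c d : K) :
    twistMul ξ (Finsupp.single a c) (Finsupp.single b d) =
      Finsupp.single (pmul a b) (c * d * ξ ^ floatCount a b) := by
  unfold twistMul
  rw [Finsupp.sum_single_index, Finsupp.sum_single_index] <;> simp

theorem twisted_subset {n : ℕ} (ξ : K) (f : PAlg n K)
    (hf : f ∈ TwistedVariant ξ (Motzkin n)) : f ∈ TwistNat ξ (Motzkin n) := by
  refine hf (TwistNat ξ (Motzkin n)) ⟨fun a ha => ⟨0, a, ha, by simp⟩, ?_⟩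
  rintro _ ⟨i, a, ha, rfl⟩ _ ⟨j, b, hb, rfl⟩
  refine ⟨i + j + floatCount a b, pmul a b, motzkin_mul a b ha hb, ?_⟩
  rw [twistMul_single, pow_add, pow_add]

/-- Lemma 4.5. Let `k` be a field and `ξ ∈ k∖{0}` not a root of unity.
Then `E(M_n^ξ) = E(J_n^ξ)`. -/
theorem twisted_motzkin_jones_idempotents {K : Type} [Field K] (n : ℕ) (ξ : K)
    (hξ : ξ ≠ 0) (hroot : ¬ ∃ m : ℕ, 0 < m ∧ ξ ^ m = 1) :
    EsetTwist ξ (TwistedVariant ξ (Motzkin n)) =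
      EsetTwist ξ (TwistedVariant ξ (Jones n)) := by
  have hJM : Jones n ⊆ Motzkin n := fun a ha => ⟨ha.1, fun x => (ha.2 x).le⟩
  ext f
  constructor
  · rintro ⟨hf, hid⟩
    refine ⟨?_, hid⟩
    obtain ⟨i, a, ha, rfl⟩ := twisted_subset ξ f hf
    rw [twistMul_single] at hid
    have hne : ξ ^ i * ξ ^ i * ξ ^ floatCount a a ≠ 0 := 
      mul_ne_zero (mul_ne_zero (pow_ne_zero _ hξ) (pow_ne_zero _ hξ)) (pow_ne_zero _ hξ)
    rcases (Finsupp.single_eq_single_iff _ _ _ _).1 hid with ⟨h1, h2⟩ | ⟨h1, _⟩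
    · have h3 : ξ ^ (i + floatCount a a) = 1 := by
        have : ξ ^ i * (ξ ^ (i + floatCount a a)) = ξ ^ i * 1 := by
          rw [pow_add, ← mul_assoc, h2, mul_one]
        exact mul_left_cancel₀ (pow_ne_zero i hξ) this
      have h4 : i + floatCount a a = 0 := by
        by_contra hc
        exact hroot ⟨_, Nat.pos_of_ne_zero hc, h3⟩
      have hi : i = 0 := by omega
      subst hi
      have hJ := idem_jones a ha h1 (by omega)
      intro T hT
      rw [pow_zero]
      exact hT.1 a hJ
    · exact (hne h1).elim
  · rintro ⟨hf, hid⟩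
    exact ⟨fun T hT => hf T ⟨fun a ha => hT.1 a (hJM ha), hT.2⟩, hid⟩
end

section
/- For all k ≥ 1: (i) e_{2k;·,0} = C_k² = e_{2k−1;·,1}, where C_k is the k-th Catalan number; and (ii) e_{2k;·,2} = e_{2k+1;·,1} − e_{2k;·,0} − S^{(1)}_{2k;·,0} − S^{(2)}_{2k;·,0}. -/
open Relation

/-! ### Twisted semigroup algebras -/

variable {K : Type} [Field K]

namespace JLR
open scoped Classical
open Finset

/-- Planar half diagrams: noncrossing involutions with exposed fixed points. -/
structure Good {n : ℕ} (f : Fin n → Fin n) : Prop where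
  inv : ∀ i, f (f i) = i
  nest : ∀ w x, w < x → x < f w → f x ≠ x ∧ w < f x ∧ f x < f w

/-- Exchange the images of `p` and `q`. -/
def sw {n : ℕ} (f : Fin n → Fin n) (p q : Fin n) : Fin n → Fin n :=
  fun i => if i = p then f q else if i = q then f p else f i

/-- Return arcs. -/
def Ret {n : ℕ} (f : Fin n → Fin n) (p q : Fin n) : Prop :=
  p < q ∧ f p = q ∧ ¬ ∃ k l, k < p ∧ q < l ∧ f k = l

theorem sw_sw {n : ℕ} (f : Fin n → Fin n) (p q : Fin n) : sw (sw f p q) p q = f := by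
  funext i
  unfold sw
  grind

theorem sw_good_add {n : ℕ} {f : Fin n → Fin n} (hf : Good f) {p q : Fin n} (hp : f p = p)
    (hq : f q = q) (hpq : p < q) (hb : ∀ x, p < x → x < q → f x ≠ x) : Good (sw f p q) := by
  have hi := hf.inv
  have hn := hf.nest
  refine ⟨?_, ?_⟩
  · intro i
    unfold sw
    grind
  · intro w x h1 h2
    have hw : w ≠ q := by
      rintro rfl
      simp only [sw] at h2
      grind
    by_cases hwp : w = p
    · subst hwp
      have e1 : sw f w q w = q := by simp [sw, hq]
      rw [e1] at h2 ⊢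
      have e2 : sw f w q x = f x := by simp only [sw]; grind
      rw [e2]
      refine ⟨hb x h1 h2, ?_, ?_⟩
      · by_contra hc
        have : f x ≠ w := by intro h; have := hi x; grind
        have := hn (f x) w (by grind) (by grind)
        grind
      · by_contra hc
        have : f x ≠ q := by intro h; have := hi x; grind
        have := hn x q (by grind) (by grind)
        grind
    · have e1 : sw f p q w = f w := by simp only [sw]; grind
      rw [e1] at h2 ⊢
      have := hn w x h1 h2
      have e2 : sw f p q x = f x := by simp only [sw]; grind
      rw [e2]; exact this

theorem sw_good_rem {n : ℕ} {f : Fin n → Fin n} (hf : Good f) {p q : Fin n} (h : Ret f p q) :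
    Good (sw f p q) := by
  have hi := hf.inv
  have hn := hf.nest
  obtain ⟨hpq, hp, hr⟩ := h
  have hq : f q = p := by rw [← hp, hi]
  refine ⟨?_, ?_⟩
  · intro i
    have := hi i
    unfold sw
    grind
  · intro w x h1 h2
    have hw : w ≠ q := by
      rintro rfl
      simp only [sw] at h2
      grind
    have hw' : w ≠ p := by
      rintro rfl
      simp only [sw] at h2
      grind
    have e1 : sw f p q w = f w := by simp only [sw]; grind
    rw [e1] at h2 ⊢
    have := hn w x h1 h2
    have e2 : sw f p q x = f x := by 
      have : x ≠ p := by
        rintro rfl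
        exact hr ⟨w, f w, by grind, by grind, rfl⟩
      have : x ≠ q := by
        rintro rfl
        exact hr ⟨w, f w, by grind, by grind, rfl⟩
      simp only [sw]; grind
    rw [e2]; exact this

theorem sw_ret {n : ℕ} {f : Fin n → Fin n} (hf : Good f) {p q : Fin n} (hp : f p = p)
    (hq : f q = q) (hpq : p < q) : Ret (sw f p q) p q := by
  have hn := hf.nest
  refine ⟨hpq, by simp [sw, hq], ?_⟩
  rintro ⟨k, l, h1, h2, h3⟩
  have e : sw f p q k = f k := by simp only [sw]; grind
  have := hn k p h1 (by grind)
  grind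

/-- Noncrossing perfect matchings of the interval `[a,b)`. -/
noncomputable def MM (n a b : ℕ) : Finset (Fin n → Fin n) :=
  univ.filter fun f => Good f ∧ ∀ i : Fin n, f i ≠ i ↔ (a ≤ i.val ∧ i.val < b)

/-- Noncrossing matchings of `[a,b) ∪ [c,d)` stabilising the first interval. -/
noncomputable def KK (n a b c d : ℕ) : Finset (Fin n → Fin n) :=
  univ.filter fun f => Good f ∧
    (∀ i : Fin n, f i ≠ i ↔ ((a ≤ i.val ∧ i.val < b) ∨ (c ≤ i.val ∧ i.val < d))) ∧
    ∀ i : Fin n, i.val < b → (f i).val < b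

theorem MM_range {n a b : ℕ} {f : Fin n → Fin n} (hf : f ∈ MM n a b) (i : Fin n)
    (h : a ≤ i.val ∧ i.val < b) : a ≤ (f i).val ∧ (f i).val < b := by
  simp only [MM, mem_filter, mem_univ, true_and] at hf
  obtain ⟨hg, h2⟩ := hf
  rw [← h2 (f i), hg.inv]
  exact fun e => (h2 i).2 h e.symm

/-- restriction to an interval -/
def rs {n : ℕ} (a b : ℕ) (f : Fin n → Fin n) : Fin n → Fin n :=
  fun i => if a ≤ i.val ∧ i.val < b then f i else i

theorem rs_mem {n a b : ℕ} {f : Fin n → Fin n} (hf : Good f)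
    (h1 : ∀ i : Fin n, a ≤ i.val → i.val < b → f i ≠ i)
    (h2 : ∀ i : Fin n, a ≤ i.val → i.val < b → a ≤ (f i).val ∧ (f i).val < b) :
    rs a b f ∈ MM n a b := by
  simp only [MM, mem_filter, mem_univ, true_and]
  have hi := hf.inv
  have hn := hf.nest
  refine ⟨⟨?_, ?_⟩, ?_⟩
  · intro i
    have := h2 i
    unfold rs
    grind
  · intro w x h3 h4
    have hw : a ≤ w.val ∧ w.val < b := by
      by_contra hc
      simp only [rs, if_neg hc] at h4
      exact absurd (h3.trans h4) (lt_irrefl _)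
    have e1 : rs a b f w = f w := by simp [rs, hw]
    rw [e1] at h4 ⊢
    have h5 := h2 w hw.1 hw.2
    have e2 : rs a b f x = f x := by 
      have : a ≤ x.val ∧ x.val < b := by
        rw [Fin.lt_def] at h3 h4; omega
      simp [rs, this]
    rw [e2]; exact hn w x h3 h4
  · intro i
    have := h1 i
    unfold rs
    grind

/-- gluing -/
def gl {n : ℕ} (b : ℕ) (f g : Fin n → Fin n) : Fin n → Fin n :=
  fun i => if i.val < b then f i else g i

theorem card_KK {n a b c d : ℕ} (hbc : b ≤ c) :
    (KK n a b c d).card = (MM n a b).card * (MM n c d).card := by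
  rw [← card_product]
  refine Finset.card_bij' (fun f _ => (rs a b f, rs c d f)) (fun p _ => gl b p.1 p.2) ?_ ?_ ?_ ?_
  · intro f hf
    simp only [KK, mem_filter, mem_univ, true_and] at hf
    obtain ⟨hg, h1, h2⟩ := hf
    have hi := hg.inv
    have h3 : ∀ i, f i ≠ i → f (f i) ≠ f i := by
      intro i h; rw [hi]; exact h.symm
    rw [mem_product]
    constructor
    · apply rs_mem hg
      · intro i h4 h5; exact (h1 i).2 (Or.inl ⟨h4, h5⟩)
      · intro i h4 h5
        have h6 := (h1 _).1 (h3 i ((h1 i).2 (Or.inl ⟨h4, h5⟩)))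
        have := h2 i h5
        omega
    · apply rs_mem hg
      · intro i h4 h5; exact (h1 i).2 (Or.inr ⟨h4, h5⟩)
      · intro i h4 h5
        have h6 := (h1 _).1 (h3 i ((h1 i).2 (Or.inr ⟨h4, h5⟩)))
        have := h2 (f i)
        rw [hi] at this
        omega
  · rintro ⟨f, g⟩ hp
    rw [mem_product] at hp
    obtain ⟨hf, hg⟩ := hp
    dsimp only at hf hg
    have rf := MM_range hf
    have rg := MM_range hg
    simp only [MM, mem_filter, mem_univ, true_and] at hf hg
    obtain ⟨hf, hf1⟩ := hf
    obtain ⟨hg, hg1⟩ := hg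
    have key1 : ∀ i : Fin n, i.val < b → (f i).val < b := by
      intro i h
      by_cases h' : a ≤ i.val
      · exact (rf i ⟨h', h⟩).2
      · have := (not_congr (hf1 i)).2 (by omega)
        rw [not_not] at this; rw [this]; exact h
    have key2 : ∀ i : Fin n, b ≤ i.val → b ≤ (g i).val := by
      intro i h
      by_cases h' : c ≤ i.val ∧ i.val < d
      · have := (rg i h').1; omega
      · have := (not_congr (hg1 i)).2 (by omega)
        rw [not_not] at this; rw [this]; exact h
    have e1 : ∀ i : Fin n, i.val < b → gl b f g i = f i := by intro i h; simp [gl, h]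
    have e2 : ∀ i : Fin n, b ≤ i.val → gl b f g i = g i := by
      intro i h; simp only [gl]; rw [if_neg (by omega)]
    simp only [KK, mem_filter, mem_univ, true_and]
    refine ⟨⟨?_, ?_⟩, ?_, ?_⟩
    · intro i
      rcases lt_or_ge i.val b with h | h
      · rw [e1 i h, e1 _ (key1 i h), hf.inv]
      · rw [e2 i h, e2 _ (key2 i h), hg.inv]
    · intro w x h3 h4
      rcases lt_or_ge w.val b with h | h
      · rw [e1 w h] at h4 ⊢
        have := key1 w h
        rw [e1 x (by rw [Fin.lt_def] at h4; omega)]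
        exact hf.nest w x h3 h4
      · rw [e2 w h] at h4 ⊢
        rw [e2 x (by rw [Fin.lt_def] at h3; omega)]
        exact hg.nest w x h3 h4
    · intro i
      rcases lt_or_ge i.val b with h | h
      · rw [e1 i h, hf1]; omega
      · rw [e2 i h, hg1]; omega
    · intro i h
      rw [e1 i h]; exact key1 i h
  · intro f hf
    simp only [KK, mem_filter, mem_univ, true_and] at hf
    obtain ⟨hg, h1, h2⟩ := hf
    funext i
    have := h1 i
    simp only [gl, rs]
    by_cases hh : f i = i
    · split_ifs <;> simp [hh]
    · have := this.1 hh
      split_ifs <;> first | rfl | omega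
  · rintro ⟨f, g⟩ hp
    rw [mem_product] at hp
    obtain ⟨hf, hg⟩ := hp
    simp only [MM, mem_filter, mem_univ, true_and] at hf hg
    obtain ⟨hf, hf1⟩ := hf
    obtain ⟨hg, hg1⟩ := hg
    ext i
    · have := hf1 i
      simp only [gl, rs]
      by_cases hh : f i = i
      · split_ifs <;> first | rfl | (exfalso; omega) | rw [hh]
      · have := this.1 hh
        split_ifs <;> first | rfl | omega
    · have := hg1 i
      simp only [gl, rs]
      by_cases hh : g i = i
      · split_ifs <;> first | rfl | (exfalso; omega) | rw [hh]
      · have := this.1 hh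
        split_ifs <;> first | rfl | omega

/-- the arc at `a` goes to `j` -/
theorem card_MM_fib {n a b : ℕ} (hab : a < b) (hb : b ≤ n) (j : Fin n) (h1 : a < j.val)
    (h2 : j.val < b) :
    ((MM n a b).filter fun f => f ⟨a, by omega⟩ = j).card = (KK n (a+1) j.val (j.val+1) b).card := by
  set p : Fin n := ⟨a, by omega⟩ with hp
  have hpj : p < j := h1
  refine Finset.card_bij' (fun f _ => sw f p j) (fun f _ => sw f p j) ?_ ?_ ?_ ?_
  · intro f hf
    have hf' := hf
    rw [mem_filter] at hf'
    have hr := MM_range hf'.1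
    simp only [MM, mem_filter, mem_univ, true_and] at hf
    obtain ⟨⟨hg, hf1⟩, hf2⟩ := hf
    have hq : f j = p := by rw [← hf2, hg.inv]
    have hret : Ret f p j := by
      refine ⟨hpj, hf2, ?_⟩
      rintro ⟨k, l, h3, h4, h5⟩
      have h6 := (not_congr (hf1 k)).2 (by rw [Fin.lt_def] at h3; simp only [hp] at h3; omega)
      rw [not_not] at h6
      have := h3.trans (hpj.trans h4)
      rw [← h5, h6] at this
      exact lt_irrefl _ this
    simp only [KK, mem_filter, mem_univ, true_and]
    refine ⟨sw_good_rem hg hret, ?_, ?_⟩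
    · intro i
      by_cases hip : i = p
      · subst hip
        simp [sw, hq, hp]
        omega
      by_cases hij : i = j
      · subst hij
        simp [sw, hq, hf2]
        omega
      have : sw f p j i = f i := by simp [sw, hip, hij]
      rw [this, hf1]
      have : i.val ≠ a := fun e => hip (Fin.ext e)
      have : i.val ≠ j.val := fun e => hij (Fin.ext e)
      omega
    · intro i hi
      by_cases hip : i = p
      · subst hip; simp only [sw, hq]; simp; exact h1
      have hij : i ≠ j := by rintro rfl; omega
      have e : sw f p j i = f i := by simp [sw, hip, hij]
      rw [e]
      by_cases hi2 : a ≤ i.val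
      · have : i.val ≠ a := fun e => hip (Fin.ext e)
        have := hg.nest p i (by rw [Fin.lt_def]; simp [hp]; omega) (by rw [hf2]; exact hi)
        rw [hf2] at this
        exact this.2.2
      · have h6 := (not_congr (hf1 i)).2 (by omega)
        rw [not_not] at h6
        rw [h6]; exact hi
  · intro f hf
    simp only [KK, mem_filter, mem_univ, true_and] at hf
    obtain ⟨hg, hf1, hf2⟩ := hf
    have fp : f p = p := by
      have h6 := (not_congr (hf1 p)).2 (by simp [hp]; omega)
      rwa [not_not] at h6
    have fj : f j = j := by
      have h6 := (not_congr (hf1 j)).2 (by omega)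
      rwa [not_not] at h6
    simp only [MM, mem_filter, mem_univ, true_and]
    refine ⟨⟨sw_good_add hg fp fj hpj ?_, ?_⟩, ?_⟩
    · intro x h3 h4
      rw [hf1]
      rw [Fin.lt_def] at h3 h4
      simp only [hp] at h3
      omega
    · intro i
      by_cases hip : i = p
      · subst hip
        simp [sw, fj, hp, hab]
        intro e; rw [e] at h1; simp at h1
      by_cases hij : i = j
      · subst hij
        simp [sw, fp, hip]
        constructor
        · intro e; omega
        · intro _ e; exact hip e.symm
      have : sw f p j i = f i := by simp [sw, hip, hij]
      rw [this, hf1]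
      have : i.val ≠ a := fun e => hip (Fin.ext e)
      have : i.val ≠ j.val := fun e => hij (Fin.ext e)
      omega
    · simp [sw, fj]
  · intro f _; exact sw_sw _ _ _
  · intro f _; exact sw_sw _ _ _

/-- catalan at half lengths -/
def cc (m : ℕ) : ℕ := if Even m then catalan (m / 2) else 0

theorem cc_two (m : ℕ) : cc (2 * m) = catalan m := by simp [cc]

theorem sum_cc (m : ℕ) :
    ∑ i ∈ range (2 * m + 1), cc i * cc (2 * m - i) = catalan (m + 1) := by
  rw [catalan_succ, ← Finset.sum_range (fun i => catalan i * catalan (m - i))]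
  rw [← Finset.sum_subset (s₁ := (range (m + 1)).image (fun i => 2 * i))]
  · rw [Finset.sum_image (by intro a _ b _ h; simpa using h)]
    apply Finset.sum_congr rfl
    intro i _
    rw [cc_two, ← Nat.mul_sub, cc_two]
  · intro x hx
    simp only [mem_image, mem_range] at hx ⊢
    omega
  · intro x hx hx2
    have : ¬ Even x := by
      rintro ⟨y, hy⟩
      apply hx2
      simp only [mem_image, mem_range] at hx ⊢
      exact ⟨y, by omega, by omega⟩
    simp [cc, this]

theorem sum_cc_odd (L : ℕ) (h : ¬ Even L) :
    ∑ i ∈ range (L + 1), cc i * cc (L - i) = 0 := by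
  apply Finset.sum_eq_zero
  intro i hi
  simp only [mem_range] at hi
  by_cases h1 : Even i
  · have : ¬ Even (L - i) := by
      rw [Nat.even_sub (by omega)]; tauto
    simp [cc, this]
  · simp [cc, h1]

theorem sum_cc' (L : ℕ) : ∑ i ∈ range (L + 1), cc i * cc (L - i) = cc (L + 2) := by
  by_cases h : Even L
  · obtain ⟨m, rfl⟩ := h
    have := sum_cc m
    rw [← two_mul, this, show 2 * m + 2 = 2 * (m + 1) by ring, cc_two]
  · rw [sum_cc_odd L h]
    have : ¬ Even (L + 2) := by rw [Nat.even_add]; simpa using h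
    simp [cc, this]

theorem card_MM {n : ℕ} (L : ℕ) : ∀ a b : ℕ, a + L = b → b ≤ n → (MM n a b).card = cc L := by
  induction L using Nat.strong_induction_on with
  | _ L ih =>
  intro a b hab hb
  rcases Nat.eq_zero_or_pos L with h0 | h0
  · subst h0
    have : MM n a b = {id} := by
      ext f
      simp only [MM, mem_filter, mem_univ, true_and, mem_singleton]
      constructor
      · rintro ⟨_, h⟩
        funext i
        have := (not_congr (h i)).2 (by omega)
        rwa [not_not] at this
      · rintro rfl
        refine ⟨⟨fun _ => rfl, fun w x h1 h2 => absurd (h1.trans h2) (lt_irrefl _)⟩, ?_⟩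
        intro i
        simp only [id, ne_eq, not_true_eq_false, false_iff]
        omega
    rw [this]; simp [cc]
  · have han : a < n := by omega
    have hmap : ∀ f ∈ MM n a b, (f ⟨a, han⟩).val ∈ Ico (a + 1) b := by
      intro f hf
      have hr := MM_range hf ⟨a, han⟩ (by simp; omega)
      simp only [MM, mem_filter, mem_univ, true_and] at hf
      have := (hf.2 ⟨a, han⟩).2 (by simp; omega)
      have : (f ⟨a, han⟩).val ≠ a := fun e => this (Fin.ext e)
      rw [mem_Ico]; omega
    rw [Finset.card_eq_sum_card_fiberwise (s := MM n a b) (f := fun f : Fin n → Fin n => (f ⟨a, han⟩).val) (t := Ico (a+1) b) hmap]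
    have : ∀ j ∈ Ico (a+1) b, ((MM n a b).filter fun f => (f ⟨a, han⟩).val = j).card
        = cc (j - (a + 1)) * cc (b - (j + 1)) := by
      intro j hj
      rw [mem_Ico] at hj
      have hjn : j < n := by omega
      have := card_MM_fib (n := n) (a := a) (b := b) (by omega) hb ⟨j, hjn⟩ (by simp; omega) (by simp; omega)
      rw [card_KK (by simp), ih (j - (a+1)) (by omega) (a+1) j (by omega) (by omega),
        ih (b - (j+1)) (by omega) (j+1) b (by omega) hb] at this
      rw [← this]
      congr 1
      ext f
      simp [Fin.ext_iff]
    rw [Finset.sum_congr rfl this]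
    rcases Nat.lt_or_ge 1 L with h1 | h1
    · obtain ⟨L', rfl⟩ : ∃ L', L = L' + 2 := ⟨L - 2, by omega⟩
      rw [← sum_cc', Finset.sum_Ico_eq_sum_range]
      rw [show b - (a + 1) = L' + 1 by omega]
      apply Finset.sum_congr rfl
      intro i hi
      rw [mem_range] at hi
      congr 2 <;> omega
    · have : L = 1 := by omega
      subst this
      rw [show Ico (a+1) b = ∅ by rw [Ico_eq_empty_iff]; omega]
      simp [cc]

/-- perfect matchings -/
theorem card_perfect (k : ℕ) : (MM (2 * k) 0 (2 * k)).card = catalan k := by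
  rw [card_MM (2 * k) 0 (2 * k) (by omega) le_rfl, cc_two]

/-- fixed points -/
noncomputable def Fx {n : ℕ} (f : Fin n → Fin n) : Finset (Fin n) := univ.filter fun i => f i = i

/-- half diagrams with `t` defects -/
noncomputable def HD (n t : ℕ) : Finset (Fin n → Fin n) :=
  univ.filter fun f => Good f ∧ (Fx f).card = t

theorem HD_zero (n : ℕ) : HD n 0 = MM n 0 n := by
  ext f
  simp only [HD, MM, mem_filter, mem_univ, true_and, card_eq_zero, Fx, filter_eq_empty_iff]
  constructor
  · rintro ⟨h, h2⟩; exact ⟨h, fun i => by simpa using h2 (x := i)⟩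
  · rintro ⟨h, h2⟩; exact ⟨h, fun i => by simpa using h2 i⟩

theorem card_HD_one (k : ℕ) : (HD (2 * k + 1) 1).card = catalan (k + 1) := by
  set n := 2 * k + 1 with hn
  have : HD n 1 = (univ : Finset (Fin n)).biUnion fun p => KK n 0 p.val (p.val + 1) n := by
    ext f
    simp only [HD, KK, mem_filter, mem_univ, true_and, mem_biUnion, card_eq_one]
    constructor
    · rintro ⟨h, p, hp⟩
      have hp' : ∀ i, f i = i ↔ i = p := by
        intro i
        have : i ∈ Fx f ↔ i ∈ ({p} : Finset (Fin n)) := by rw [hp]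
        simpa [Fx] using this
      refine ⟨p, h, ?_, ?_⟩
      · intro i
        rw [ne_eq, hp', Fin.ext_iff]
        omega
      · intro i hi
        by_contra hc
        have e : f i ≠ p := by
          intro e
          have := h.inv i
          rw [e, (hp' p).2 rfl] at this
          rw [this] at hi; exact lt_irrefl _ hi
        have := h.nest i p hi (lt_of_le_of_ne (not_lt.1 hc) e.symm)
        exact this.1 ((hp' p).2 rfl)
    · rintro ⟨p, h, h2, h3⟩
      refine ⟨h, p, ?_⟩
      ext i
      simp only [Fx, mem_filter, mem_univ, true_and, mem_singleton]
      rw [← not_iff_not, ← ne_eq, h2, Fin.ext_iff]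
      omega
  rw [this, card_biUnion]
  · have : ∀ p ∈ (univ : Finset (Fin n)), (KK n 0 p.val (p.val + 1) n).card
        = cc p.val * cc (2 * k - p.val) := by
      intro p _
      rw [card_KK (by omega), card_MM p.val 0 p.val (by omega) (by omega),
        card_MM (2 * k - p.val) (p.val + 1) n (by omega) (by omega)]
    rw [Finset.sum_congr rfl this, Fin.sum_univ_eq_sum_range (fun i => cc i * cc (2 * k - i)), hn,
      sum_cc]
  · intro p _ q _ hpq
    change Disjoint (KK n 0 p.val (p.val + 1) n) (KK n 0 q.val (q.val + 1) n)
    rw [Finset.disjoint_left]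
    intro f hf hf2
    simp only [KK, mem_filter, mem_univ, true_and] at hf hf2
    have h1 := hf.2.1 p
    have h2 := hf2.2.1 p
    have : p.val ≠ q.val := fun e => hpq (Fin.ext e)
    rw [h1] at h2
    omega

/-- the set of returns -/
noncomputable def Rs {n : ℕ} (f : Fin n → Fin n) : Finset (Fin n × Fin n) :=
  univ.filter fun p => Ret f p.1 p.2

theorem card_cuts {n : ℕ} {f : Fin n → Fin n} (hf : f ∈ HD n 0) :
    ((range (n + 1)).filter fun j => ∀ i : Fin n, i.val < j → (f i).val < j).card
      = 1 + (Rs f).card := by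
  rw [HD_zero] at hf
  simp only [MM, mem_filter, mem_univ, true_and] at hf
  obtain ⟨hg, hf1⟩ := hf
  have hne : ∀ i, f i ≠ i := fun i => (hf1 i).2 (by omega)
  have hi := hg.inv
  have : ((range (n + 1)).filter fun j => ∀ i : Fin n, i.val < j → (f i).val < j)
      = insert 0 ((Rs f).image fun p => p.2.val + 1) := by
    ext j
    simp only [mem_filter, mem_range, mem_insert, mem_image, Rs, mem_univ, true_and, Prod.exists]
    constructor
    · rintro ⟨h1, h2⟩
      rcases Nat.eq_zero_or_pos j with h0 | h0
      · exact Or.inl h0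
      · right
        set q : Fin n := ⟨j - 1, by omega⟩ with hq
        have hqv : q.val = j - 1 := rfl
        have h3 := h2 q (by omega)
        have h4 : (f q).val ≠ q.val := fun e => hne q (Fin.ext e)
        refine ⟨f q, q, ⟨?_, hi q, ?_⟩, by omega⟩
        · rw [Fin.lt_def]; omega
        · rintro ⟨k, l, h5, h6, h7⟩
          rw [Fin.lt_def] at h5 h6
          have := h2 k (by omega)
          rw [h7] at this
          omega
    · rintro (rfl | ⟨p, q, ⟨h1, h2, h3⟩, rfl⟩)
      · simp
      · refine ⟨by omega, ?_⟩
        intro i h4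
        by_contra hc
        have h5 : q < f i := by rw [Fin.lt_def]; omega
        have hfq : f q = p := by rw [← h2, hi]
        rcases lt_trichotomy i p with h | h | h
        · exact h3 ⟨i, f i, h, h5, rfl⟩
        · subst h; rw [h2] at h5; exact lt_irrefl _ h5
        · have h6 : i ≠ q := by
            rintro rfl
            rw [hfq] at h5
            exact lt_irrefl _ (h.trans h5)
          have h7 : i < f p := by
            rw [h2]
            have : i.val ≠ q.val := fun e => h6 (Fin.ext e)
            rw [Fin.lt_def]; omega
          have := (hg.nest p i h h7).2.2
          rw [h2] at this
          exact lt_irrefl _ (this.trans h5)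
  rw [this, card_insert_of_notMem (by simp), card_image_of_injOn, add_comm]
  rintro ⟨p, q⟩ hp ⟨p', q'⟩ hp' h
  replace hp := (mem_filter.1 (mem_coe.1 hp)).2
  replace hp' := (mem_filter.1 (mem_coe.1 hp')).2
  simp only [Ret] at hp hp' h
  have : q = q' := Fin.ext (by omega)
  subst this
  have : p = p' := by rw [← hi p, hp.2.1, ← hi p', hp'.2.1]
  rw [this]

theorem sum_returns (k : ℕ) :
    ∑ f ∈ HD (2 * k) 0, (1 + (Rs f).card) = catalan (k + 1) := by
  rw [Finset.sum_congr rfl (fun f hf => (card_cuts hf).symm)]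
  simp only [card_filter]
  rw [Finset.sum_comm]
  rw [← sum_cc]
  apply Finset.sum_congr rfl
  intro j hj
  rw [mem_range] at hj
  rw [← card_filter]
  have : (HD (2 * k) 0).filter (fun f => ∀ i : Fin (2 * k), i.val < j → (f i).val < j)
      = KK (2 * k) 0 j j (2 * k) := by
    rw [HD_zero]
    ext f
    simp only [MM, KK, mem_filter, mem_univ, true_and, and_assoc]
    refine and_congr Iff.rfl (and_congr (forall_congr' fun i => ?_) Iff.rfl)
    refine iff_congr Iff.rfl ?_
    omega
  rw [this, card_KK le_rfl, card_MM j 0 j (by omega) (by omega),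
    card_MM (2 * k - j) j (2 * k) (by omega) le_rfl]

end JLR

namespace JLR
open scoped Classical
open Finset

/-- number of fixed points to the left -/
noncomputable def cnt {n : ℕ} (f : Fin n → Fin n) (i : Fin n) : ℕ :=
  (univ.filter fun j => j < i ∧ f j = j).card

theorem cnt_lt {n : ℕ} {f : Fin n → Fin n} {i j : Fin n} (hij : i < j) (hi : f i = i) :
    cnt f i < cnt f j := by
  unfold cnt
  apply Finset.card_lt_card
  rw [Finset.ssubset_iff_of_subset]
  · exact ⟨i, by simp [hij, hi], by simp⟩
  · intro x hx
    simp only [mem_filter, mem_univ, true_and] at hx ⊢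
    exact ⟨hx.1.trans hij, hx.2⟩

theorem cnt_inj {n : ℕ} {f : Fin n → Fin n} {i j : Fin n} (hi : f i = i) (hj : f j = j)
    (h : cnt f i = cnt f j) : i = j := by
  rcases lt_trichotomy i j with h1 | h1 | h1
  · have := cnt_lt h1 hi; omega
  · exact h1
  · have := cnt_lt h1 hj; omega

theorem cnt_lt_card {n : ℕ} {f : Fin n → Fin n} {i : Fin n} (hi : f i = i) :
    cnt f i < (Fx f).card := by
  unfold cnt
  apply Finset.card_lt_card
  rw [Finset.ssubset_iff_of_subset]
  · exact ⟨i, by simp [hi, Fx], by simp⟩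
  · intro x hx
    simp only [mem_filter, mem_univ, true_and, Fx] at hx ⊢
    exact hx.2

theorem exists_cnt {n : ℕ} {f : Fin n → Fin n} {c : ℕ} (h : c < (Fx f).card) :
    ∃ j, f j = j ∧ cnt f j = c := by
  have : (Fx f).image (cnt f) = range (Fx f).card := by
    apply Finset.eq_of_subset_of_card_le
    · intro x hx
      simp only [mem_image, Fx, mem_filter, mem_univ, true_and] at hx
      obtain ⟨i, h1, rfl⟩ := hx
      rw [mem_range]; exact cnt_lt_card h1
    · rw [card_range, card_image_of_injOn]
      intro i hi j hj h
      have hi := (mem_filter.1 (mem_coe.1 hi)).2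
      have hj := (mem_filter.1 (mem_coe.1 hj)).2
      exact cnt_inj hi hj h
  have hc : c ∈ (Fx f).image (cnt f) := by rw [this, mem_range]; exact h
  simpa [Fx] using hc

/-- block key -/
noncomputable def key {n : ℕ} (f g : Fin n → Fin n) : PV n → ℕ × ℕ
  | .inl i => if f i = i then (0, cnt f i) else (1, min i.val (f i).val)
  | .inr i => if g i = i then (0, cnt g i) else (2, min i.val (g i).val)

/-- The partition with upper half `f` and lower half `g`. -/
noncomputable def mk {n : ℕ} (f g : Fin n → Fin n) : PElt n := Setoid.ker (key f g)

theorem min_aux {n : ℕ} {f : Fin n → Fin n} (hf : ∀ i, f (f i) = i) {i j : Fin n} :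
    min i.val (f i).val = min j.val (f j).val ↔ i = j ∨ f i = j := by
  constructor
  · intro h
    have hi := hf i
    have hj := hf j
    by_contra hc
    push Not at hc
    have h1 : i.val ≠ j.val := fun e => hc.1 (Fin.ext e)
    have h2 : (f i).val ≠ j.val := fun e => hc.2 (Fin.ext e)
    have h3 : i.val ≠ (f j).val := fun e => hc.2 (by rw [Fin.ext e, hj])
    have h4 : (f i).val ≠ (f j).val := fun e => hc.1 (by rw [← hi, Fin.ext e, hj])
    omega
  · rintro (rfl | rfl)
    · rfl
    · rw [hf, min_comm]

theorem mk_ll {n : ℕ} {f g : Fin n → Fin n} (hf : ∀ i, f (f i) = i) (i j : Fin n) :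
    (mk f g).r (.inl i) (.inl j) ↔ i = j ∨ f i = j := by
  change key f g (.inl i) = key f g (.inl j) ↔ _
  simp only [key]
  by_cases h1 : f i = i <;> by_cases h2 : f j = j
  · simp only [h1, h2, if_true, Prod.mk.injEq, true_and, or_self]
    exact ⟨cnt_inj h1 h2, fun e => by rw [e]⟩
  · simp only [h1, h2, if_true, if_false, Prod.mk.injEq, or_self]
    constructor
    · intro h; omega
    · rintro rfl; exact absurd h1 h2
  · simp only [h1, h2, if_true, if_false, Prod.mk.injEq]
    constructor
    · intro h; omega
    · rintro (rfl | h)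
      · exact absurd h2 h1
      · have := hf i; rw [h, h2] at this; subst this; exact absurd h2 h1
  · simp only [h1, h2, if_false, Prod.mk.injEq, true_and]
    exact min_aux hf

theorem mk_rr {n : ℕ} {f g : Fin n → Fin n} (hg : ∀ i, g (g i) = i) (i j : Fin n) :
    (mk f g).r (.inr i) (.inr j) ↔ i = j ∨ g i = j := by
  change key f g (.inr i) = key f g (.inr j) ↔ _
  simp only [key]
  by_cases h1 : g i = i <;> by_cases h2 : g j = j
  · simp only [h1, h2, if_true, Prod.mk.injEq, true_and, or_self]
    exact ⟨cnt_inj h1 h2, fun e => by rw [e]⟩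
  · simp only [h1, h2, if_true, if_false, Prod.mk.injEq, or_self]
    constructor
    · intro h; omega
    · rintro rfl; exact absurd h1 h2
  · simp only [h1, h2, if_true, if_false, Prod.mk.injEq]
    constructor
    · intro h; omega
    · rintro (rfl | h)
      · exact absurd h2 h1
      · have := hg i; rw [h, h2] at this; subst this; exact absurd h2 h1
  · simp only [h1, h2, if_false, Prod.mk.injEq, true_and]
    exact min_aux hg

/-- transversals -/
def TT {n : ℕ} (f g : Fin n → Fin n) (i j : Fin n) : Prop :=
  f i = i ∧ g j = j ∧ cnt f i = cnt g j

theorem mk_lr {n : ℕ} {f g : Fin n → Fin n} (i j : Fin n) :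
    (mk f g).r (.inl i) (.inr j) ↔ TT f g i j := by
  change key f g (.inl i) = key f g (.inr j) ↔ _
  simp only [key, TT]
  by_cases h1 : f i = i <;> by_cases h2 : g j = j <;> simp [h1, h2]

theorem mk_rl {n : ℕ} {f g : Fin n → Fin n} (i j : Fin n) :
    (mk f g).r (.inr j) (.inl i) ↔ TT f g i j := by
  rw [← mk_lr]
  exact ⟨fun h => (mk f g).symm h, fun h => (mk f g).symm h⟩

/-- admissible pairs -/
def PS (n : ℕ) : Set ((Fin n → Fin n) × (Fin n → Fin n)) :=
  {p | Good p.1 ∧ Good p.2 ∧ (Fx p.1).card = (Fx p.2).card}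

theorem TT_exists_r {n : ℕ} {f g : Fin n → Fin n} (h : (Fx f).card = (Fx g).card) {i : Fin n}
    (hi : f i = i) : ∃ j, TT f g i j := by
  obtain ⟨j, h1, h2⟩ := exists_cnt (f := g) (c := cnt f i) (by rw [← h]; exact cnt_lt_card hi)
  exact ⟨j, hi, h1, h2.symm⟩

theorem TT_exists_l {n : ℕ} {f g : Fin n → Fin n} (h : (Fx f).card = (Fx g).card) {j : Fin n}
    (hj : g j = j) : ∃ i, TT f g i j := by
  obtain ⟨i, h1, h2⟩ := exists_cnt (f := f) (c := cnt g j) (by rw [h]; exact cnt_lt_card hj)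
  exact ⟨i, h1, hj, h2⟩

theorem TT_r {n : ℕ} {f g : Fin n → Fin n} {i j j' : Fin n} (h : TT f g i j) (h' : TT f g i j') :
    j = j' := cnt_inj h.2.1 h'.2.1 (h.2.2.symm.trans h'.2.2)

theorem TT_l {n : ℕ} {f g : Fin n → Fin n} {i i' j : Fin n} (h : TT f g i j) (h' : TT f g i' j) :
    i = i' := cnt_inj h.1 h'.1 (h.2.2.trans h'.2.2.symm)

theorem TT_mono {n : ℕ} {f g : Fin n → Fin n} {i i' j j' : Fin n} (h : TT f g i j)
    (h' : TT f g i' j') (hi : i < i') : j < j' := by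
  have h1 := cnt_lt hi h.1
  rcases lt_trichotomy j j' with h2 | h2 | h2
  · exact h2
  · subst h2; have := h.2.2; have := h'.2.2; omega
  · have := cnt_lt h2 h'.2.1; have := h.2.2; have := h'.2.2; omega

theorem blockCard_iff {n : ℕ} (a : PElt n) (x : PV n) :
    blockCard a x = 2 ↔ ∃ y, y ≠ x ∧ ∀ z, a.r x z ↔ z = x ∨ z = y := by
  unfold blockCard
  have : Nat.card {y : PV n // a.r x y} = Set.ncard {y | a.r x y} := rfl
  rw [this, Set.ncard_eq_two]
  have hx : a.r x x := a.refl x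
  constructor
  · rintro ⟨u, v, huv, h⟩
    have h' : ∀ z, a.r x z ↔ z = u ∨ z = v := by
      intro z
      have : z ∈ {y | a.r x y} ↔ z ∈ ({u, v} : Set (PV n)) := by rw [h]
      simpa using this
    rcases (h' x).1 hx with rfl | rfl
    · exact ⟨v, huv.symm, h'⟩
    · exact ⟨u, huv, fun z => by rw [h' z, or_comm]⟩
  · rintro ⟨y, h1, h2⟩
    refine ⟨x, y, h1.symm, ?_⟩
    ext z
    simpa using h2 z

theorem ordIdx_inj {n : ℕ} {x y : PV n} (h : ordIdx n x = ordIdx n y) : x = y := by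
  rcases x with i | i <;> rcases y with j | j <;> simp only [ordIdx] at h
  · rw [Fin.ext h]
  · exfalso; omega
  · exfalso; omega
  · rw [Fin.ext (a := i) (b := j) (by omega)]

theorem mk_mem {n : ℕ} {f g : Fin n → Fin n} (h : (f, g) ∈ PS n) : mk f g ∈ Jones n := by
  obtain ⟨hf, hg, hc⟩ := h
  dsimp only at hf hg hc
  refine ⟨?_, ?_⟩
  · rintro ⟨w, x, y, z, h1, h2, h3, h4, h5, h6⟩
    rcases w with w | w <;> rcases x with x | x <;> rcases y with y | y <;> rcases z with z | z <;>
      simp only [ordIdx] at h1 h2 h3 <;> simp only [mk_ll hf.inv, mk_rr hg.inv, mk_lr, mk_rl] at h4 h5 <;>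
      try (exfalso; omega)
    · have e1 : f w = y := by
        rcases h4 with rfl | h4
        · omega
        · exact h4
      have e2 : f x = z := by
        rcases h5 with rfl | h5
        · omega
        · exact h5
      have := hf.nest w x (by rw [Fin.lt_def]; omega) (by rw [e1, Fin.lt_def]; omega)
      rw [e1, e2, Fin.lt_def, Fin.lt_def] at this
      omega
    · have e1 : f w = y := by
        rcases h4 with rfl | h4
        · omega
        · exact h4
      have := hf.nest w x (by rw [Fin.lt_def]; omega) (by rw [e1, Fin.lt_def]; omega)
      exact this.1 h5.1
    · have := TT_mono h4 h5 (by rw [Fin.lt_def]; omega)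
      rw [Fin.lt_def] at this
      omega
    · have e1 : g z = x := by
        rcases h5 with rfl | h5
        · omega
        · rw [← h5, hg.inv]
      have := hg.nest z y (by rw [Fin.lt_def]; omega) (by rw [e1, Fin.lt_def]; omega)
      exact this.1 h4.2.1
    · have e1 : g z = x := by
        rcases h5 with rfl | h5
        · omega
        · rw [← h5, hg.inv]
      have e2 : g y = w := by
        rcases h4 with rfl | h4
        · omega
        · rw [← h4, hg.inv]
      have := hg.nest z y (by rw [Fin.lt_def]; omega) (by rw [e1, Fin.lt_def]; omega)
      rw [e1, e2, Fin.lt_def, Fin.lt_def] at this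
      omega
  · intro x
    rw [blockCard_iff]
    rcases x with i | i
    · by_cases hi : f i = i
      · obtain ⟨j, hj⟩ := TT_exists_r hc hi
        refine ⟨.inr j, by simp, ?_⟩
        rintro (z | z)
        · rw [mk_ll hf.inv, hi]; simp [eq_comm]
        · rw [mk_lr]
          simp only [reduceCtorEq, Sum.inr.injEq, false_or]
          exact ⟨fun h => TT_r h hj, fun h => h ▸ hj⟩
      · refine ⟨.inl (f i), by simpa using hi, ?_⟩
        rintro (z | z)
        · rw [mk_ll hf.inv]; simp [eq_comm]
        · rw [mk_lr]
          simp only [reduceCtorEq, or_self, iff_false]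
          exact fun h => hi h.1
    · by_cases hi : g i = i
      · obtain ⟨j, hj⟩ := TT_exists_l hc hi
        refine ⟨.inl j, by simp, ?_⟩
        rintro (z | z)
        · rw [mk_rl]
          simp only [reduceCtorEq, Sum.inl.injEq, false_or]
          exact ⟨fun h => TT_l h hj, fun h => h ▸ hj⟩
        · rw [mk_rr hg.inv, hi]; simp [eq_comm]
      · refine ⟨.inr (g i), by simpa using hi, ?_⟩
        rintro (z | z)
        · rw [mk_rl]
          simp only [reduceCtorEq, or_self, iff_false]
          exact fun h => hi h.2.1
        · rw [mk_rr hg.inv]; simp [eq_comm]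

theorem mk_inj {n : ℕ} : Set.InjOn (fun p : (Fin n → Fin n) × (Fin n → Fin n) => mk p.1 p.2) (PS n) := by
  rintro ⟨f, g⟩ ⟨hf, hg, hc⟩ ⟨f', g'⟩ ⟨hf', hg', hc'⟩ h
  dsimp only at *
  have e : ∀ x y, (mk f g).r x y ↔ (mk f' g').r x y := by intro x y; rw [h]
  have e1 : f = f' := by
    funext i
    have h1 := e (.inl i) (.inl (f i))
    have h2 := e (.inl i) (.inl (f' i))
    rw [mk_ll hf.inv, mk_ll hf'.inv] at h1 h2
    grind
  have e2 : g = g' := by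
    funext i
    have h1 := e (.inr i) (.inr (g i))
    have h2 := e (.inr i) (.inr (g' i))
    rw [mk_rr hg.inv, mk_rr hg'.inv] at h1 h2
    grind
  rw [e1, e2]

theorem mk_surj {n : ℕ} {a : PElt n} (ha : a ∈ Jones n) : ∃ f g, (f, g) ∈ PS n ∧ mk f g = a := by
  obtain ⟨hpl, hb⟩ := ha
  choose P hP1 hP2 using fun x => (blockCard_iff a x).1 (hb x)
  have hPP : ∀ x, P (P x) = x := by
    intro x
    have h1 : a.r (P x) x := a.symm ((hP2 x (P x)).2 (Or.inr rfl))
    rcases (hP2 _ _).1 h1 with h | h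
    · exact absurd h.symm (hP1 x)
    · exact h.symm
  have hrel : ∀ x, a.r x (P x) := fun x => (hP2 x (P x)).2 (Or.inr rfl)
  have pl : ∀ w x, ordIdx n w < ordIdx n x → ordIdx n x < ordIdx n (P w) →
      ordIdx n w < ordIdx n (P x) ∧ ordIdx n (P x) < ordIdx n (P w) := by
    intro w x h1 h2
    have nw : ¬ a.r w x := by
      intro h
      rcases (hP2 w x).1 h with h | h
      · rw [h] at h1; exact lt_irrefl _ h1
      · rw [h] at h2; exact lt_irrefl _ h2
    have n1 : ordIdx n (P x) ≠ ordIdx n w := by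
      intro e
      have := ordIdx_inj e
      rw [← this, hPP] at h2
      exact lt_irrefl _ h2
    have n2 : ordIdx n (P x) ≠ ordIdx n (P w) := by
      intro e
      have := congrArg P (ordIdx_inj e)
      rw [hPP, hPP] at this
      rw [this] at h1
      exact lt_irrefl _ h1
    have n3 : ¬ ordIdx n (P x) < ordIdx n w := fun h =>
      hpl ⟨P x, w, x, P w, h, h1, h2, a.symm (hrel x), hrel w,
        fun h => nw (a.symm (a.trans (hrel x) h))⟩
    have n4 : ¬ ordIdx n (P w) < ordIdx n (P x) := fun h =>
      hpl ⟨w, x, P w, P x, h1, h2, h, hrel w, hrel x, nw⟩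
    omega
  let f : Fin n → Fin n := fun i => Sum.elim id (fun _ => i) (P (.inl i))
  let g : Fin n → Fin n := fun i => Sum.elim (fun _ => i) id (P (.inr i))
  have f1 : ∀ i j, P (.inl i) = .inl j → f i = j := by intro i j h; simp [f, h]
  have f2 : ∀ i j, P (.inl i) = .inr j → f i = i := by intro i j h; simp [f, h]
  have g1 : ∀ i j, P (.inr i) = .inr j → g i = j := by intro i j h; simp [g, h]
  have g2 : ∀ i j, P (.inr i) = .inl j → g i = i := by intro i j h; simp [g, h]
  have f3 : ∀ i, f i ≠ i → P (.inl i) = .inl (f i) := by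
    intro i h
    rcases hh : P (.inl i) with j | j
    · rw [f1 i j hh]
    · exact absurd (f2 i j hh) h
  have g3 : ∀ i, g i ≠ i → P (.inr i) = .inr (g i) := by
    intro i h
    rcases hh : P (.inr i) with j | j
    · exact absurd (g2 i j hh) h
    · rw [g1 i j hh]
  have f4 : ∀ i, f i = i → ∃ j, P (.inl i) = .inr j := by
    intro i h
    rcases hh : P (.inl i) with j | j
    · have := f1 i j hh
      rw [← this, h] at hh
      exact absurd hh (hP1 _)
    · exact ⟨j, rfl⟩
  have g4 : ∀ i, g i = i → ∃ j, P (.inr i) = .inl j := by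
    intro i h
    rcases hh : P (.inr i) with j | j
    · exact ⟨j, rfl⟩
    · have := g1 i j hh
      rw [← this, h] at hh
      exact absurd hh (hP1 _)
  have fi : ∀ i, f (f i) = i := by
    intro i
    by_cases h : f i = i
    · rw [h, h]
    · exact f1 _ _ (by rw [← f3 i h, hPP])
  have gi : ∀ i, g (g i) = i := by
    intro i
    by_cases h : g i = i
    · rw [h, h]
    · exact g1 _ _ (by rw [← g3 i h, hPP])
  have Gf : Good f := by
    refine ⟨fi, ?_⟩
    intro w x h1 h2
    have hw := f3 w (by intro e; rw [e] at h2; exact lt_irrefl _ (h1.trans h2))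
    have := pl (.inl w) (.inl x) h1 (by rw [hw]; exact h2)
    rw [hw] at this
    rcases hx : P (.inl x) with j | j
    · have hfx := f1 _ _ hx
      rw [hx] at this
      refine ⟨?_, ?_, ?_⟩
      · rw [hfx]; rintro rfl; exact hP1 _ hx
      · rw [hfx]; exact this.1
      · rw [hfx]; exact this.2
    · rw [hx] at this
      simp only [ordIdx] at this
      omega
  have Gg : Good g := by
    refine ⟨gi, ?_⟩
    intro w x h1 h2
    have hw := g3 w (by intro e; rw [e] at h2; exact lt_irrefl _ (h1.trans h2))
    have hw' : P (.inr (g w)) = .inr w := by rw [← hw, hPP]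
    rw [Fin.lt_def] at h1 h2
    have := pl (.inr (g w)) (.inr x) (by simp only [ordIdx]; omega)
      (by rw [hw']; simp only [ordIdx]; omega)
    rw [hw'] at this
    rcases hx : P (.inr x) with j | j
    · rw [hx] at this
      simp only [ordIdx] at this
      omega
    · have hgx := g1 _ _ hx
      rw [hx] at this
      simp only [ordIdx] at this
      refine ⟨?_, ?_, ?_⟩
      · rw [hgx]; rintro rfl; exact hP1 _ hx
      · rw [hgx, Fin.lt_def]; omega
      · rw [hgx, Fin.lt_def]; omega
  let φ : Fin n → Fin n := fun i => Sum.elim (fun _ => i) id (P (.inl i))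
  let ψ : Fin n → Fin n := fun i => Sum.elim id (fun _ => i) (P (.inr i))
  have hφ : ∀ i, f i = i → P (.inl i) = .inr (φ i) := by
    intro i h
    obtain ⟨j, hj⟩ := f4 i h
    simp [φ, hj]
  have hψ : ∀ i, g i = i → P (.inr i) = .inl (ψ i) := by
    intro i h
    obtain ⟨j, hj⟩ := g4 i h
    simp [ψ, hj]
  have hφ' : ∀ i, f i = i → P (.inr (φ i)) = .inl i := by
    intro i h; rw [← hφ i h, hPP]
  have hψ' : ∀ i, g i = i → P (.inl (ψ i)) = .inr i := by
    intro i h; rw [← hψ i h, hPP]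
  have gφ : ∀ i, f i = i → g (φ i) = φ i := fun i h => g2 _ _ (hφ' i h)
  have fψ : ∀ i, g i = i → f (ψ i) = ψ i := fun i h => f2 _ _ (hψ' i h)
  have ψφ : ∀ i, f i = i → ψ (φ i) = i := by
    intro i h
    have := hψ _ (gφ i h)
    rw [hφ' i h] at this
    simpa using this.symm
  have φψ : ∀ i, g i = i → φ (ψ i) = i := by
    intro i h
    have := hφ _ (fψ i h)
    rw [hψ' i h] at this
    simpa using this.symm
  have φm : ∀ i j, f i = i → f j = j → i < j → φ i < φ j := by
    intro i j h1 h2 h3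
    have := pl (.inl i) (.inl j) h3 (by rw [hφ i h1]; simp only [ordIdx]; omega)
    rw [hφ i h1, hφ j h2] at this
    simp only [ordIdx] at this
    rw [Fin.lt_def]; omega
  have ψm : ∀ i j, g i = i → g j = j → i < j → ψ i < ψ j := by
    intro i j h1 h2 h3
    rcases lt_trichotomy (ψ i) (ψ j) with h | h | h
    · exact h
    · have := φψ i h1; rw [h, φψ j h2] at this; rw [this] at h3; exact absurd h3 (lt_irrefl _)
    · have := φm _ _ (fψ j h2) (fψ i h1) h
      rw [φψ j h2, φψ i h1] at this
      exact absurd (h3.trans this) (lt_irrefl _)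
  have hcard : (Fx f).card = (Fx g).card := by
    refine Finset.card_bij' (fun i _ => φ i) (fun i _ => ψ i) ?_ ?_ ?_ ?_
    · intro i hi; simp only [Fx, mem_filter, mem_univ, true_and] at hi ⊢; exact gφ i hi
    · intro i hi; simp only [Fx, mem_filter, mem_univ, true_and] at hi ⊢; exact fψ i hi
    · intro i hi; simp only [Fx, mem_filter, mem_univ, true_and] at hi ⊢; exact ψφ i hi
    · intro i hi; simp only [Fx, mem_filter, mem_univ, true_and] at hi ⊢; exact φψ i hi
  have hcnt : ∀ i, f i = i → cnt f i = cnt g (φ i) := by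
    intro i hi
    refine Finset.card_bij' (fun i _ => φ i) (fun i _ => ψ i) ?_ ?_ ?_ ?_
    · intro j hj; simp only [mem_filter, mem_univ, true_and] at hj ⊢
      exact ⟨φm j i hj.2 hi hj.1, gφ j hj.2⟩
    · intro j hj; simp only [mem_filter, mem_univ, true_and] at hj ⊢
      have := ψm j (φ i) hj.2 (gφ i hi) hj.1
      rw [ψφ i hi] at this
      exact ⟨this, fψ j hj.2⟩
    · intro j hj; simp only [mem_filter, mem_univ, true_and] at hj ⊢; exact ψφ j hj.2
    · intro j hj; simp only [mem_filter, mem_univ, true_and] at hj ⊢; exact φψ j hj.2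
  have lr : ∀ i j, TT f g i j ↔ a.r (.inl i) (.inr j) := by
    intro i j
    rw [hP2]
    simp only [reduceCtorEq, false_or]
    constructor
    · intro h
      rw [hφ i h.1]
      have := cnt_inj h.2.1 (gφ i h.1) (by rw [← h.2.2, hcnt i h.1])
      rw [← this]
    · intro h
      have h1 := f2 _ _ h.symm
      have h2 := hφ i h1
      rw [← h] at h2
      have h3 : j = φ i := by simpa using h2
      exact ⟨h1, by rw [h3]; exact gφ i h1, by rw [h3]; exact hcnt i h1⟩
  refine ⟨f, g, ⟨Gf, Gg, hcard⟩, ?_⟩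
  apply Setoid.ext
  intro x y
  change (mk f g).r x y ↔ a.r x y
  rcases x with i | i <;> rcases y with j | j
  · rw [mk_ll fi, hP2]
    by_cases h : f i = i
    · rw [hφ i h, h]; simp [eq_comm]
    · rw [f3 i h]; simp [eq_comm]
  · rw [mk_lr, lr]
  · rw [mk_rl, lr]; exact ⟨fun h => a.symm h, fun h => a.symm h⟩
  · rw [mk_rr gi, hP2]
    by_cases h : g i = i
    · rw [hψ i h, h]; simp [eq_comm]
    · rw [g3 i h]; simp [eq_comm]

end JLR

namespace JLR
open scoped Classical
open Finset

/-- connectivity in the interface graph of a pair -/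
def CC {n : ℕ} (f g : Fin n → Fin n) : Fin n → Fin n → Prop :=
  EqvGen fun i j => f i = j ∨ g i = j

theorem eqvGen_inv {α : Type*} {r : α → α → Prop} {S : α → Prop}
    (h : ∀ x y, r x y → (S x ↔ S y)) {x y : α} (hxy : EqvGen r x y) : S x ↔ S y := by
  induction hxy with
  | rel x y h1 => exact h x y h1
  | refl x => exact Iff.rfl
  | symm x y _ ih => exact ih.symm
  | trans x y z _ _ ih1 ih2 => exact ih1.trans ih2

theorem CC_refl {n : ℕ} {f g : Fin n → Fin n} (i : Fin n) : CC f g i i := EqvGen.refl i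
theorem CC_symm {n : ℕ} {f g : Fin n → Fin n} {i j : Fin n} (h : CC f g i j) : CC f g j i :=
  EqvGen.symm _ _ h
theorem CC_trans {n : ℕ} {f g : Fin n → Fin n} {i j k : Fin n} (h : CC f g i j)
    (h' : CC f g j k) : CC f g i k := EqvGen.trans _ _ _ h h'
theorem CC_f {n : ℕ} {f g : Fin n → Fin n} (i : Fin n) : CC f g i (f i) :=
  EqvGen.rel _ _ (Or.inl rfl)
theorem CC_g {n : ℕ} {f g : Fin n → Fin n} (i : Fin n) : CC f g i (g i) :=
  EqvGen.rel _ _ (Or.inr rfl)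

theorem CC_closed {n : ℕ} {f g : Fin n → Fin n} (hf : ∀ i, f (f i) = i) (hg : ∀ i, g (g i) = i)
    {S : Fin n → Prop} (h1 : ∀ i, S i → S (f i)) (h2 : ∀ i, S i → S (g i)) {i j : Fin n}
    (h : CC f g i j) (hi : S i) : S j := by
  refine (eqvGen_inv (S := S) ?_ h).1 hi
  rintro x y (rfl | rfl)
  · exact ⟨h1 x, fun h => by have := h1 _ h; rwa [hf] at this⟩
  · exact ⟨h2 x, fun h => by have := h2 _ h; rwa [hg] at this⟩

theorem low_iff {n : ℕ} {f g : Fin n → Fin n} (hf : ∀ i, f (f i) = i) (i j : Fin n) :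
    LowEdge (mk f g) i j ↔ i ≠ j ∧ f i = j := by
  unfold LowEdge
  rw [mk_ll hf]
  tauto

theorem up_iff {n : ℕ} {f g : Fin n → Fin n} (hg : ∀ i, g (g i) = i) (i j : Fin n) :
    UpEdge (mk f g) i j ↔ i ≠ j ∧ g i = j := by
  unfold UpEdge
  rw [mk_rr hg]
  tauto

theorem hasLow_iff {n : ℕ} {f g : Fin n → Fin n} (hf : ∀ i, f (f i) = i) (i : Fin n) :
    hasLow (mk f g) i ↔ f i ≠ i := by
  unfold hasLow
  simp only [low_iff hf]
  exact ⟨fun ⟨j, h, h'⟩ e => h (by rw [← h', e]), fun h => ⟨f i, h.symm, rfl⟩⟩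

theorem hasUp_iff {n : ℕ} {f g : Fin n → Fin n} (hg : ∀ i, g (g i) = i) (i : Fin n) :
    hasUp (mk f g) i ↔ g i ≠ i := by
  unfold hasUp
  simp only [up_iff hg]
  exact ⟨fun ⟨j, h, h'⟩ e => h (by rw [← h', e]), fun h => ⟨g i, h.symm, rfl⟩⟩

theorem gconn_iff {n : ℕ} {f g : Fin n → Fin n} (hf : ∀ i, f (f i) = i) (hg : ∀ i, g (g i) = i)
    (i j : Fin n) : gconn (mk f g) i j ↔ CC f g i j := by
  constructor
  · intro h
    refine (eqvGen_inv (S := fun j => CC f g i j) ?_ h).1 (CC_refl i)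
    rintro x y (h | h)
    · rw [low_iff hf] at h
      rw [← h.2]
      exact ⟨fun h => CC_trans h (CC_f x), fun h => CC_trans h (CC_symm (CC_f x))⟩
    · rw [up_iff hg] at h
      rw [← h.2]
      exact ⟨fun h => CC_trans h (CC_g x), fun h => CC_trans h (CC_symm (CC_g x))⟩
  · intro h
    refine (eqvGen_inv (S := fun j => gconn (mk f g) i j) ?_ h).1 (EqvGen.refl i)
    intro x y h
    by_cases hxy : x = y
    · rw [hxy]
    have : gedge (mk f g) x y := by
      rcases h with h | h
      · exact Or.inl ((low_iff hf x y).2 ⟨hxy, h⟩)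
      · exact Or.inr ((up_iff hg x y).2 ⟨hxy, h⟩)
    exact ⟨fun h => EqvGen.trans _ _ _ h (EqvGen.rel _ _ this),
      fun h => EqvGen.trans _ _ _ h (EqvGen.symm _ _ (EqvGen.rel _ _ this))⟩

/-- component of a vertex -/
def cl {n : ℕ} (f g : Fin n → Fin n) (i : Fin n) : Set (Fin n) := {j | CC f g i j}

theorem cl_eq_iff {n : ℕ} {f g : Fin n → Fin n} {i j : Fin n} : cl f g i = cl f g j ↔ CC f g i j := by
  constructor
  · intro h
    have : j ∈ cl f g i := by rw [h]; exact CC_refl j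
    exact this
  · intro h
    ext k
    exact ⟨fun h' => CC_trans (CC_symm h) h', fun h' => CC_trans h h'⟩

theorem isComp_iff {n : ℕ} {f g : Fin n → Fin n} (hf : ∀ i, f (f i) = i) (hg : ∀ i, g (g i) = i)
    (θ : Set (Fin n)) : IsComp (mk f g) θ ↔ ∃ i, θ = cl f g i := by
  unfold IsComp
  simp only [gconn_iff hf hg]
  constructor
  · rintro ⟨⟨i, hi⟩, h⟩
    refine ⟨i, ?_⟩
    ext j
    exact (h i hi j).symm
  · rintro ⟨i, rfl⟩
    refine ⟨⟨i, CC_refl i⟩, ?_⟩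
    intro j hj k
    exact ⟨fun h => CC_trans hj h, fun h => CC_trans (CC_symm hj) h⟩

theorem comp_mem {n : ℕ} {f g : Fin n → Fin n} {i : Fin n} {θ : Set (Fin n)}
    (h : ∃ i, θ = cl f g i) : i ∈ θ ↔ θ = cl f g i := by
  obtain ⟨j, rfl⟩ := h
  rw [cl_eq_iff]; rfl

theorem stack_inv {n : ℕ} {f g : Fin n → Fin n} (hf : ∀ i, f (f i) = i) (hg : ∀ i, g (g i) = i)
    (S : TV n → Prop)
    (h1 : ∀ i, S (.inl i) ↔ S (.inl (f i)))
    (h2 : ∀ i j, TT f g i j → (S (.inl i) ↔ S (.inr (.inl j))))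
    (h3 : ∀ i, S (.inr (.inl i)) ↔ S (.inr (.inl (g i))))
    (h4 : ∀ i, S (.inr (.inl i)) ↔ S (.inr (.inl (f i))))
    (h5 : ∀ i j, TT f g i j → (S (.inr (.inl i)) ↔ S (.inr (.inr j))))
    (h6 : ∀ i, S (.inr (.inr i)) ↔ S (.inr (.inr (g i)))) {x y : TV n}
    (h : EqvGen (stackRel (mk f g) (mk f g)) x y) : S x ↔ S y := by
  refine eqvGen_inv ?_ h
  rintro x y (⟨p, q, hpq, rfl, rfl⟩ | ⟨p, q, hpq, rfl, rfl⟩)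
  · rcases p with p | p <;> rcases q with q | q <;> simp only [upEmb]
    · rw [mk_ll hf] at hpq
      rcases hpq with rfl | rfl
      · rfl
      · exact h1 p
    · rw [mk_lr] at hpq; exact h2 _ _ hpq
    · rw [mk_rl] at hpq; exact (h2 _ _ hpq).symm
    · rw [mk_rr hg] at hpq
      rcases hpq with rfl | rfl
      · rfl
      · exact h3 p
  · rcases p with p | p <;> rcases q with q | q <;> simp only [downEmb]
    · rw [mk_ll hf] at hpq
      rcases hpq with rfl | rfl
      · rfl
      · exact h4 p
    · rw [mk_lr] at hpq; exact h5 _ _ hpq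
    · rw [mk_rl] at hpq; exact (h5 _ _ hpq).symm
    · rw [mk_rr hg] at hpq
      rcases hpq with rfl | rfl
      · rfl
      · exact h6 p

theorem stack_mid {n : ℕ} {f g : Fin n → Fin n} (hf : ∀ i, f (f i) = i) (hg : ∀ i, g (g i) = i)
    {i j : Fin n} (h : CC f g i j) :
    EqvGen (stackRel (mk f g) (mk f g)) (.inr (.inl i)) (.inr (.inl j)) := by
  refine CC_closed hf hg (S := fun j => EqvGen (stackRel (mk f g) (mk f g)) (.inr (.inl i)) (.inr (.inl j)))
    ?_ ?_ h (EqvGen.refl _)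
  · intro k hk
    refine EqvGen.trans _ _ _ hk (EqvGen.rel _ _ (Or.inr ⟨.inl k, .inl (f k), ?_, rfl, rfl⟩))
    rw [mk_ll hf]; exact Or.inr rfl
  · intro k hk
    refine EqvGen.trans _ _ _ hk (EqvGen.rel _ _ (Or.inl ⟨.inr k, .inr (g k), ?_, rfl, rfl⟩))
    rw [mk_rr hg]; exact Or.inr rfl

/-- combinatorial idempotency criterion -/
def Crit {n : ℕ} (f g : Fin n → Fin n) : Prop :=
  (∀ i j, TT f g i j → CC f g i j) ∧ (∀ i j, g i = i → g j = j → CC f g i j → i = j)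

theorem idem_iff {n : ℕ} {f g : Fin n → Fin n} (h : (f, g) ∈ PS n) :
    pmul (mk f g) (mk f g) = mk f g ↔ Crit f g := by
  obtain ⟨hf, hg, hc⟩ := h
  dsimp only at hf hg hc
  replace hf := hf.inv
  replace hg := hg.inv
  constructor
  · intro hid
    have e : ∀ x y, EqvGen (stackRel (mk f g) (mk f g)) (outEmb x) (outEmb y) ↔ (mk f g).r x y := by
      intro x y
      have : (pmul (mk f g) (mk f g)).r x y ↔ (mk f g).r x y := by rw [hid]
      exact this
    have top : ∀ i j, TT f g i j →
        EqvGen (stackRel (mk f g) (mk f g)) (.inl i) (.inr (.inl j)) := fun i j h =>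
      EqvGen.rel _ _ (Or.inl ⟨.inl i, .inr j, (mk_lr i j).2 h, rfl, rfl⟩)
    have c2 : ∀ i j, g i = i → g j = j → CC f g i j → i = j := by
      intro i j hi hj hij
      obtain ⟨p, hp⟩ := TT_exists_l hc hi
      obtain ⟨q, hq⟩ := TT_exists_l hc hj
      have h1 := (e (.inl p) (.inl q)).1 (EqvGen.trans _ _ _ (EqvGen.trans _ _ _ (top _ _ hp)
        (stack_mid hf hg hij)) (EqvGen.symm _ _ (top _ _ hq)))
      rw [mk_ll hf, hp.1, or_self] at h1
      subst h1
      exact TT_r hp hq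
    refine ⟨?_, c2⟩
    intro p r hpr
    let S : TV n → Prop := Sum.elim (fun i => i = p)
      (Sum.elim (fun i => CC f g r i) (fun j => ∃ p2, CC f g r p2 ∧ TT f g p2 j))
    have := (stack_inv hf hg S ?_ ?_ ?_ ?_ ?_ ?_
      ((e (.inl p) (.inr r)).2 ((mk_lr p r).2 hpr))).1 rfl
    · obtain ⟨p2, h1, h2⟩ := this
      rw [TT_l hpr h2]
      exact CC_symm h1
    · intro i
      change i = p ↔ f i = p
      constructor
      · rintro rfl; exact hpr.1
      · intro h; have := hf i; rw [h, hpr.1] at this; exact this.symm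
    · intro i j hij
      change i = p ↔ CC f g r j
      constructor
      · rintro rfl; rw [TT_r hpr hij]; exact CC_refl _
      · intro h
        have := c2 _ _ hpr.2.1 hij.2.1 h
        subst this
        exact TT_l hij hpr
    · intro i
      exact ⟨fun h => CC_trans h (CC_g i), fun h => CC_trans h (CC_symm (CC_g i))⟩
    · intro i
      exact ⟨fun h => CC_trans h (CC_f i), fun h => CC_trans h (CC_symm (CC_f i))⟩
    · intro i j hij
      change CC f g r i ↔ ∃ p2, CC f g r p2 ∧ TT f g p2 j
      exact ⟨fun h => ⟨i, h, hij⟩, fun ⟨p2, h, h'⟩ => by rw [TT_l hij h']; exact h⟩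
    · intro i
      change (∃ p2, CC f g r p2 ∧ TT f g p2 i) ↔ (∃ p2, CC f g r p2 ∧ TT f g p2 (g i))
      constructor
      · rintro ⟨p2, h, h'⟩; exact ⟨p2, h, by rw [h'.2.1]; exact h'⟩
      · rintro ⟨p2, h, h'⟩
        refine ⟨p2, h, ?_⟩
        have := h'.2.1
        rw [hg] at this
        rw [← this] at h'
        exact h'
  · rintro ⟨c1, c2⟩
    apply Setoid.ext
    intro x y
    change EqvGen (stackRel (mk f g) (mk f g)) (outEmb x) (outEmb y) ↔ (mk f g).r x y
    have lr : ∀ i j, TT f g i j →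
        EqvGen (stackRel (mk f g) (mk f g)) (.inl i) (.inr (.inr j)) := fun i j h =>
      EqvGen.trans _ _ _ (EqvGen.trans _ _ _
        (EqvGen.rel _ _ (Or.inl ⟨.inl i, .inr j, (mk_lr i j).2 h, rfl, rfl⟩))
        (stack_mid hf hg (CC_symm (c1 i j h))))
        (EqvGen.rel _ _ (Or.inr ⟨.inl i, .inr j, (mk_lr i j).2 h, rfl, rfl⟩))
    constructor
    · intro hxy
      let S : TV n → Prop := Sum.elim (fun i => (mk f g).r x (.inl i))
        (Sum.elim (fun i => ∃ p r, TT f g p r ∧ CC f g r i ∧ (mk f g).r x (.inl p))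
        (fun j => (mk f g).r x (.inr j)))
      have hS : ∀ z, S (outEmb z) ↔ (mk f g).r x z := by
        rintro (z | z) <;> exact Iff.rfl
      rw [← hS]
      refine (stack_inv hf hg S ?_ ?_ ?_ ?_ ?_ ?_ hxy).1 ((hS x).2 ((mk f g).refl x))
      · intro i
        have : (mk f g).r (.inl i) (.inl (f i)) := by rw [mk_ll hf]; exact Or.inr rfl
        exact ⟨fun h => (mk f g).trans h this, fun h => (mk f g).trans h ((mk f g).symm this)⟩
      · intro i j hij
        constructor
        · intro h; exact ⟨i, j, hij, CC_refl j, h⟩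
        · rintro ⟨p, r, h1, h2, h3⟩
          have := c2 _ _ h1.2.1 hij.2.1 h2
          subst this
          rw [TT_l h1 hij] at h3
          exact h3
      · intro i
        constructor
        · rintro ⟨p, r, h1, h2, h3⟩; exact ⟨p, r, h1, CC_trans h2 (CC_g i), h3⟩
        · rintro ⟨p, r, h1, h2, h3⟩; exact ⟨p, r, h1, CC_trans h2 (CC_symm (CC_g i)), h3⟩
      · intro i
        constructor
        · rintro ⟨p, r, h1, h2, h3⟩; exact ⟨p, r, h1, CC_trans h2 (CC_f i), h3⟩
        · rintro ⟨p, r, h1, h2, h3⟩; exact ⟨p, r, h1, CC_trans h2 (CC_symm (CC_f i)), h3⟩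
      · intro i j hij
        have hr : (mk f g).r (.inl i) (.inr j) := (mk_lr i j).2 hij
        constructor
        · rintro ⟨p, r, h1, h2, h3⟩
          have := c2 _ _ h1.2.1 hij.2.1 (CC_trans h2 (c1 _ _ hij))
          subst this
          rw [TT_l h1 hij] at h3
          exact (mk f g).trans h3 hr
        · intro h
          exact ⟨i, j, hij, CC_symm (c1 _ _ hij), (mk f g).trans h ((mk f g).symm hr)⟩
      · intro i
        have : (mk f g).r (.inr i) (.inr (g i)) := by rw [mk_rr hg]; exact Or.inr rfl
        exact ⟨fun h => (mk f g).trans h this, fun h => (mk f g).trans h ((mk f g).symm this)⟩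
    · intro h
      rcases x with i | i <;> rcases y with j | j
      · exact EqvGen.rel _ _ (Or.inl ⟨.inl i, .inl j, h, rfl, rfl⟩)
      · exact lr i j ((mk_lr i j).1 h)
      · exact EqvGen.symm _ _ (lr j i ((mk_rl j i).1 h))
      · exact EqvGen.rel _ _ (Or.inr ⟨.inr i, .inr j, h, rfl, rfl⟩)

theorem numPaths_eq {n : ℕ} {f g : Fin n → Fin n} (h : (f, g) ∈ PS n) (hcr : Crit f g) :
    numPaths (mk f g) = (Fx g).card := by
  obtain ⟨hf, hg, hc⟩ := h
  dsimp only at hf hg hc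
  replace hf := hf.inv
  replace hg := hg.inv
  have hcomp : ∀ θ, IsPathComp (mk f g) θ ↔ ∃ j, g j = j ∧ θ = cl f g j := by
    intro θ
    unfold IsPathComp
    simp only [isComp_iff hf hg, hasLow_iff hf, hasUp_iff hg, not_not]
    constructor
    · rintro ⟨h, i, hi, h2⟩
      rw [comp_mem h] at hi
      rcases h2 with h2 | h2
      · obtain ⟨j, hj⟩ := TT_exists_r hc h2
        refine ⟨j, hj.2.1, ?_⟩
        rw [hi, cl_eq_iff]
        exact hcr.1 _ _ hj
      · exact ⟨i, h2, hi⟩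
    · rintro ⟨j, hj, rfl⟩
      exact ⟨⟨j, rfl⟩, j, CC_refl j, Or.inr hj⟩
  unfold numPaths
  have hm : ∀ j : {j // j ∈ Fx g}, g j.1 = j.1 := fun j => (mem_filter.1 j.2).2
  rw [← Fintype.card_coe, ← Nat.card_eq_fintype_card]
  symm
  refine Nat.card_eq_of_bijective
    (fun j : {j // j ∈ Fx g} => (⟨cl f g j.1, (hcomp _).2 ⟨j.1, hm j, rfl⟩⟩ :
      {θ : Set (Fin n) // IsPathComp (mk f g) θ})) ⟨?_, ?_⟩
  · intro i j hij
    have := congrArg Subtype.val hij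
    exact Subtype.ext (hcr.2 _ _ (hm i) (hm j) (cl_eq_iff.1 this))
  · rintro ⟨θ, hθ⟩
    obtain ⟨j, hj, rfl⟩ := (hcomp _).1 hθ
    exact ⟨⟨j, mem_filter.2 ⟨mem_univ _, hj⟩⟩, rfl⟩

theorem even_card_of_inv {n : ℕ} {f : Fin n → Fin n} (hf : ∀ i, f (f i) = i) (s : Finset (Fin n))
    (h1 : ∀ i ∈ s, f i ∈ s) (h2 : ∀ i ∈ s, f i ≠ i) : Even s.card := by
  have : ∑ x ∈ s, (1 : ZMod 2) = 0 :=
    Finset.sum_involution (fun i _ => f i) (fun i _ => by decide) (fun i hi _ => h2 i hi)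
      (fun i hi => h1 i hi) (fun i _ => hf i)
  rw [Finset.sum_const, nsmul_eq_mul, mul_one] at this
  exact (ZMod.natCast_eq_zero_iff_even).1 this

theorem parity_arc_lt {n : ℕ} {f : Fin n → Fin n} (hf : Good f) {i : Fin n} (h : i < f i) :
    Odd (i.val + (f i).val) := by
  have : Even (Ioo i (f i)).card := by
    apply even_card_of_inv hf.inv
    · intro x hx
      rw [mem_Ioo] at hx ⊢
      exact (hf.nest i x hx.1 hx.2).2
    · intro x hx
      rw [mem_Ioo] at hx
      exact (hf.nest i x hx.1 hx.2).1
  rw [Fin.card_Ioo] at this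
  rw [Fin.lt_def] at h
  rw [Nat.odd_iff]
  rw [Nat.even_iff] at this
  omega

theorem parity_arc {n : ℕ} {f : Fin n → Fin n} (hf : Good f) {i : Fin n} (h : f i ≠ i) :
    Odd (i.val + (f i).val) := by
  rcases lt_or_gt_of_ne h with h | h
  · have := parity_arc_lt hf (i := f i) (by rwa [hf.inv])
    rwa [hf.inv, add_comm] at this
  · exact parity_arc_lt hf h

theorem parity_fix {n : ℕ} {f : Fin n → Fin n} (hf : Good f) {p : Fin n} (h : f p = p) :
    Even (p.val + cnt f p) := by
  have h1 : Even ((Iio p).filter fun j => ¬ f j = j).card := by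
    apply even_card_of_inv hf.inv
    · intro x hx
      simp only [mem_filter, mem_Iio] at hx ⊢
      refine ⟨?_, by rw [hf.inv]; exact fun e => hx.2 e.symm⟩
      by_contra hc
      rcases (not_lt.1 hc).lt_or_eq with h' | h'
      · exact (hf.nest x p hx.1 h').1 h
      · have := hf.inv x
        rw [← h', h] at this
        rw [this] at hx; exact lt_irrefl _ hx.1
    · intro x hx
      exact (mem_filter.1 hx).2
  have h2 := Finset.card_filter_add_card_filter_not (s := Iio p) (fun j => f j = j)
  have h3 : cnt f p = ((Iio p).filter fun j => f j = j).card := by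
    unfold cnt
    congr 1
    ext x
    simp
  rw [← h3, Fin.card_Iio] at h2
  rw [Nat.even_iff] at *
  omega

/-- sign of a position -/
def sg {n : ℕ} (i : Fin n) : ℤ := (-1) ^ i.val

theorem sg_ne {n : ℕ} (i : Fin n) : sg i ≠ 0 := by
  unfold sg; positivity

theorem sg_arc {n : ℕ} {i j : Fin n} (h : Odd (i.val + j.val)) : sg i + sg j = 0 := by
  unfold sg
  rcases Nat.even_or_odd i.val with hi | hi
  · have hj : Odd j.val := by rw [Nat.odd_add] at h; rw [← Nat.not_even_iff_odd]; intro h'; exact (Nat.not_odd_iff_even.2 hi) (h.2 h')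
    rw [hi.neg_one_pow, hj.neg_one_pow]; rfl
  · have hj : Even j.val := by rw [Nat.odd_add] at h; exact h.1 hi
    rw [hi.neg_one_pow, hj.neg_one_pow]; rfl

theorem sum_sg {n : ℕ} {f : Fin n → Fin n} (hf : Good f) (O : Finset (Fin n))
    (h1 : ∀ i ∈ O, f i ∈ O) : ∑ x ∈ O, sg x = ∑ x ∈ O.filter (fun i => f i = i), sg x := by
  rw [← Finset.sum_filter_add_sum_filter_not O (fun i => f i = i) sg]
  rw [add_eq_left]
  refine Finset.sum_involution (fun i _ => f i) ?_ ?_ ?_ ?_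
  · intro i hi
    exact sg_arc (parity_arc hf (mem_filter.1 hi).2)
  · intro i hi _
    exact (mem_filter.1 hi).2
  · intro i hi
    rw [mem_filter] at hi ⊢
    exact ⟨h1 i hi.1, by rw [hf.inv]; exact fun e => hi.2 e.symm⟩
  · intro i _; exact hf.inv i

/-- components as finsets -/
noncomputable def clF {n : ℕ} (f g : Fin n → Fin n) (i : Fin n) : Finset (Fin n) :=
  univ.filter fun j => CC f g i j

theorem mem_clF {n : ℕ} {f g : Fin n → Fin n} {i j : Fin n} : j ∈ clF f g i ↔ CC f g i j := by
  simp [clF]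

theorem sum_cl {n : ℕ} {f g : Fin n → Fin n} (hf : Good f) (hg : Good g) (i : Fin n) :
    ∑ x ∈ (Fx f).filter (fun x => CC f g i x), sg x
      = ∑ x ∈ (Fx g).filter (fun x => CC f g i x), sg x := by
  have h1 := sum_sg hf (clF f g i) (by
    intro j hj; rw [mem_clF] at *; exact CC_trans hj (CC_f j))
  have h2 := sum_sg hg (clF f g i) (by
    intro j hj; rw [mem_clF] at *; exact CC_trans hj (CC_g j))
  have e1 : (Fx f).filter (fun x => CC f g i x) = (clF f g i).filter (fun i => f i = i) := by
    ext x; simp [Fx, clF, and_comm]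
  have e2 : (Fx g).filter (fun x => CC f g i x) = (clF f g i).filter (fun i => g i = i) := by
    ext x; simp [Fx, clF, and_comm]
  rw [e1, e2, ← h1, ← h2]

theorem crit_zero {n : ℕ} {f g : Fin n → Fin n} (h : (f, g) ∈ PS n) (h0 : (Fx g).card = 0) :
    Crit f g := by
  rw [card_eq_zero] at h0
  have : ∀ i, g i ≠ i := by
    intro i hi
    have : i ∈ Fx g := by simp [Fx, hi]
    rw [h0] at this; simp at this
  exact ⟨fun i j h => absurd h.2.1 (this j), fun i j h => absurd h (this i)⟩

theorem crit_one {n : ℕ} {f g : Fin n → Fin n} (h : (f, g) ∈ PS n) (h1 : (Fx g).card = 1) :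
    Crit f g := by
  obtain ⟨hf, hg, hc⟩ := h
  dsimp only at hf hg hc
  rw [h1] at hc
  rw [card_eq_one] at hc h1
  obtain ⟨p, hp⟩ := hc
  obtain ⟨r, hr⟩ := h1
  have hp' : ∀ i, f i = i → i = p := by
    intro i hi
    have : i ∈ Fx f := by simp [Fx, hi]
    rwa [hp, mem_singleton] at this
  have hr' : ∀ i, g i = i → i = r := by
    intro i hi
    have : i ∈ Fx g := by simp [Fx, hi]
    rwa [hr, mem_singleton] at this
  refine ⟨?_, fun i j hi hj _ => (hr' i hi).trans (hr' j hj).symm⟩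
  intro i j hij
  rw [hp' i hij.1, hr' j hij.2.1]
  by_contra hcc
  have := sum_cl hf hg p
  rw [hp, hr, filter_singleton, filter_singleton, if_pos (CC_refl p), if_neg hcc] at this
  simp at this
  exact sg_ne p this

theorem dihedral {n : ℕ} {f g : Fin n → Fin n} (hf : ∀ i, f (f i) = i) (hg : ∀ i, g (g i) = i)
    {p r s : Fin n} (hp : f p = p) (hr : g r = r) (hs : g s = s) (h1 : CC f g r p)
    (h2 : CC f g r s) : r = s := by
  let F : Equiv.Perm (Fin n) := Function.Involutive.toPerm f hf
  let G : Equiv.Perm (Fin n) := Function.Involutive.toPerm g hg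
  have hF : F * F = 1 := Equiv.ext hf
  have hG : G * G = 1 := Equiv.ext hg
  have hFi : F⁻¹ = F := by rw [inv_eq_iff_mul_eq_one]; exact hF
  have hGi : G⁻¹ = G := by rw [inv_eq_iff_mul_eq_one]; exact hG
  let H := G * F
  have hHi : H⁻¹ = F * G := by simp [H, hFi, hGi]
  have sF : SemiconjBy F H H⁻¹ := by
    change F * (G * F) = H⁻¹ * F
    rw [hHi, mul_assoc]
  have sG : SemiconjBy G H H⁻¹ := by
    change G * (G * F) = H⁻¹ * G
    rw [hHi, mul_assoc, hG, ← mul_assoc, hG, one_mul, mul_one]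
  have gk : ∀ k : ℤ, g ((H ^ k) r) = (H ^ (-k)) r := by
    intro k
    have : (G * H ^ k) r = (H⁻¹ ^ k * G) r := by rw [(sG.zpow_right k).eq]
    rw [inv_zpow', Equiv.Perm.mul_apply, Equiv.Perm.mul_apply] at this
    have e : G r = r := hr
    rw [e] at this
    exact this
  have fk : ∀ k : ℤ, f ((H ^ k) r) = (H ^ (-k - 1)) r := by
    intro k
    have : (F * H ^ k) r = (H⁻¹ ^ k * F) r := by rw [(sF.zpow_right k).eq]
    rw [inv_zpow', Equiv.Perm.mul_apply, Equiv.Perm.mul_apply] at this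
    have e : F r = H⁻¹ r := by
      rw [hHi, Equiv.Perm.mul_apply]
      have e : G r = r := hr
      rw [e]
    have e2 : (H ^ (-k)) (H⁻¹ r) = (H ^ (-k - 1)) r := by
      rw [sub_eq_add_neg, zpow_add, zpow_neg_one, Equiv.Perm.mul_apply]
    rw [e] at this
    exact this.trans e2
  have orb : ∀ x, CC f g r x → ∃ k : ℤ, x = (H ^ k) r := by
    intro x hx
    refine CC_closed hf hg (S := fun x => ∃ k : ℤ, x = (H ^ k) r) ?_ ?_ hx ⟨0, by simp⟩
    · rintro i ⟨k, rfl⟩; exact ⟨_, fk k⟩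
    · rintro i ⟨k, rfl⟩; exact ⟨_, gk k⟩
  obtain ⟨j, rfl⟩ := orb p h1
  obtain ⟨k, rfl⟩ := orb s h2
  rw [fk] at hp
  rw [gk] at hs
  have a1 : (H ^ (2 * j + 1)) r = r := by
    have := congrArg (fun x => (H ^ (j + 1)) x) hp
    simp only [← Equiv.Perm.mul_apply, ← zpow_add] at this
    rw [show j + 1 + (-j - 1) = 0 by ring, show j + 1 + j = 2 * j + 1 by ring] at this
    simpa using this.symm
  have a2 : (H ^ (2 * k)) r = r := by
    have := congrArg (fun x => (H ^ k) x) hs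
    simp only [← Equiv.Perm.mul_apply, ← zpow_add] at this
    rw [show k + -k = 0 by ring, show k + k = 2 * k by ring] at this
    simpa using this.symm
  have b1 : ((H ^ (2 * j + 1)) ^ k) r = r := Equiv.Perm.zpow_apply_eq_self_of_apply_eq_self a1 k
  have b2 : ((H ^ (2 * k)) ^ (-j)) r = r := Equiv.Perm.zpow_apply_eq_self_of_apply_eq_self a2 (-j)
  rw [← zpow_mul] at b1 b2
  have : (H ^ ((2 * j + 1) * k) * H ^ (2 * k * -j)) r = r := by
    rw [Equiv.Perm.mul_apply, b2, b1]
  rw [← zpow_add, show (2 * j + 1) * k + 2 * k * -j = k by ring] at this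
  exact this.symm

end JLR

namespace JLR
open scoped Classical
open Finset

theorem Fx_sw {n : ℕ} {f : Fin n → Fin n} (hf : f ∈ HD n 0) {p q : Fin n} (h : Ret f p q) :
    Fx (sw f p q) = {p, q} := by
  have hg : Good f := (mem_filter.1 hf).2.1
  have hi := hg.inv
  have h0 : ∀ i, f i ≠ i := by
    intro i hi
    have h1 := (mem_filter.1 hf).2.2
    rw [card_eq_zero] at h1
    have : i ∈ Fx f := by simp [Fx, hi]
    rw [h1] at this; simp at this
  ext x
  simp only [Fx, mem_filter, mem_univ, mem_insert, mem_singleton, sw]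
  obtain ⟨h1, h2, -⟩ := h
  grind

theorem sg_eq {n : ℕ} {i j : Fin n} {c : ℕ} (h : Even (i.val + c)) (h' : Even (j.val + c)) :
    sg i = sg j := by
  unfold sg
  have : Even i.val ↔ Even j.val := by
    rw [Nat.even_iff, Nat.even_iff]; rw [Nat.even_iff] at h h'; omega
  rcases Nat.even_or_odd i.val with hi | hi
  · rw [hi.neg_one_pow, (this.1 hi).neg_one_pow]
  · have hj : Odd j.val := by
      rw [← Nat.not_even_iff_odd] at hi ⊢; exact fun h => hi (this.2 h)
    rw [hi.neg_one_pow, hj.neg_one_pow]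

theorem crit_two {n : ℕ} {f0 g0 : Fin n → Fin n} (hf0 : f0 ∈ HD n 0) (hg0 : g0 ∈ HD n 0)
    {p q r s : Fin n} (hp : Ret f0 p q) (hr : Ret g0 r s) :
    Crit (sw f0 p q) (sw g0 r s) ↔ CC f0 g0 p r := by
  have hFf := Fx_sw hf0 hp
  have hFg := Fx_sw hg0 hr
  have gf0 : Good f0 := (mem_filter.1 hf0).2.1
  have gg0 : Good g0 := (mem_filter.1 hg0).2.1
  have hf := sw_good_rem gf0 hp
  have hg := sw_good_rem gg0 hr
  have pq : p < q := hp.1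
  have rs : r < s := hr.1
  have ef : ∀ x, x ≠ p → x ≠ q → sw f0 p q x = f0 x := by intro x h1 h2; simp [sw, h1, h2]
  have eg : ∀ x, x ≠ r → x ≠ s → sw g0 r s x = g0 x := by intro x h1 h2; simp [sw, h1, h2]
  have f0p : f0 p = q := hp.2.1
  have g0r : g0 r = s := hr.2.1
  have f0q : f0 q = p := by rw [← f0p, gf0.inv]
  have g0s : g0 s = r := by rw [← g0r, gg0.inv]
  have fx : ∀ x, sw f0 p q x = x ↔ x = p ∨ x = q := by
    intro x
    have : x ∈ Fx (sw f0 p q) ↔ x ∈ ({p, q} : Finset _) := by rw [hFf]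
    simpa [Fx] using this
  have gx : ∀ x, sw g0 r s x = x ↔ x = r ∨ x = s := by
    intro x
    have : x ∈ Fx (sw g0 r s) ↔ x ∈ ({r, s} : Finset _) := by rw [hFg]
    simpa [Fx] using this
  have hcard : (Fx (sw f0 p q)).card = (Fx (sw g0 r s)).card := by
    rw [hFf, hFg, card_pair pq.ne, card_pair rs.ne]
  have hle : ∀ i j, CC (sw f0 p q) (sw g0 r s) i j → CC f0 g0 i j := by
    intro i j h
    refine CC_closed hf.inv hg.inv (S := fun j => CC f0 g0 i j) ?_ ?_ h (CC_refl i)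
    · intro x hx
      by_cases h1 : sw f0 p q x = x
      · rw [h1]; exact hx
      · have h2 := h1; rw [fx] at h2; push Not at h2
        rw [ef x h2.1 h2.2]; exact CC_trans hx (CC_f x)
    · intro x hx
      by_cases h1 : sw g0 r s x = x
      · rw [h1]; exact hx
      · have h2 := h1; rw [gx] at h2; push Not at h2
        rw [eg x h2.1 h2.2]; exact CC_trans hx (CC_g x)
  obtain ⟨j1, t1⟩ := TT_exists_r hcard ((fx p).2 (Or.inl rfl))
  obtain ⟨j2, t2⟩ := TT_exists_r hcard ((fx q).2 (Or.inr rfl))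
  have hj := TT_mono t1 t2 pq
  have h1 := (gx j1).1 t1.2.1
  have h2 := (gx j2).1 t2.2.1
  have e1 : j1 = r := by
    rcases h1 with h1 | h1
    · exact h1
    · rcases h2 with h2 | h2 <;> subst h1 <;> subst h2
      · exact absurd hj (not_lt.2 rs.le)
      · exact absurd hj (lt_irrefl _)
  have e2 : j2 = s := by
    rcases h2 with h2 | h2
    · subst e1; subst h2; exact absurd hj (lt_irrefl _)
    · exact h2
  subst e1 e2
  have s1 : sg j1 = sg p := by
    refine sg_eq (parity_fix hg t1.2.1) ?_
    rw [← t1.2.2]; exact parity_fix hf t1.1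
  have s2 : sg j2 = sg q := by
    refine sg_eq (parity_fix hg t2.2.1) ?_
    rw [← t2.2.2]; exact parity_fix hf t2.1
  have s3 : sg q = - sg p := by
    have : f0 p ≠ p := by rw [f0p]; exact pq.ne'
    have := sg_arc (parity_arc gf0 this)
    rw [f0p] at this
    linarith
  have s0 := sg_ne p
  constructor
  · intro h
    exact hle _ _ (h.1 _ _ t1)
  · intro h
    have hsum := sum_cl hf hg
    rw [hFf, hFg] at hsum
    simp only [Finset.sum_filter, Finset.sum_pair pq.ne, Finset.sum_pair rs.ne, s1, s2, s3] at hsum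
    generalize hF : sw f0 p q = f at *
    generalize hG : sw g0 j1 j2 = g at *
    have c1 : CC f g j1 p := by
      by_contra hc
      have := hsum j1
      rw [if_neg hc, if_pos (CC_refl j1)] at this
      have a1 : CC f g j1 j2 := by
        by_contra h'
        rw [if_neg h'] at this
        split_ifs at this <;> · apply s0; linarith
      have a2 : ¬ CC f g j1 q := by
        intro h'
        rw [if_pos a1, if_pos h'] at this
        apply s0; linarith
      refine hc (CC_closed gf0.inv gg0.inv (S := fun x => CC f g j1 x) ?_ ?_ (CC_symm h)
        (CC_refl _))
      · intro x hx
        rw [← ef x (by rintro rfl; exact hc hx) (by rintro rfl; exact a2 hx)]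
        exact CC_trans hx (CC_f x)
      · intro x hx
        by_cases x1 : x = j1
        · rw [x1, g0r]; exact a1
        by_cases x2 : x = j2
        · rw [x2, g0s]; exact CC_refl _
        rw [← eg x x1 x2]
        exact CC_trans hx (CC_g x)
    have c2 : ¬ CC f g j1 j2 := by
      intro h'
      exact rs.ne (dihedral hf.inv hg.inv t1.1 t1.2.1 t2.2.1 c1 h')
    have c3 : CC f g j2 q := by
      by_contra h'
      have := hsum j2
      have n1 : ¬ CC f g j2 p := fun h => c2 (CC_trans c1 (CC_symm h))
      have n2 : ¬ CC f g j2 j1 := fun h => c2 (CC_symm h)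
      rw [if_neg n1, if_neg h', if_neg n2, if_pos (CC_refl j2)] at this
      apply s0; linarith
    refine ⟨?_, ?_⟩
    · intro i j hij
      rcases (fx i).1 hij.1 with rfl | rfl
      · rw [TT_r hij t1]; exact CC_symm c1
      · rw [TT_r hij t2]; exact CC_symm c3
    · intro i j hi hj' hij
      rcases (gx i).1 hi with rfl | rfl <;> rcases (gx j).1 hj' with rfl | rfl
      · rfl
      · exact absurd hij c2
      · exact absurd (CC_symm hij) c2
      · rfl

/-- idempotent pairs of rank `t` -/
noncomputable def IP (n t : ℕ) : Finset ((Fin n → Fin n) × (Fin n → Fin n)) :=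
  (HD n t ×ˢ HD n t).filter fun x => Crit x.1 x.2

theorem IP_PS {n t : ℕ} {x : (Fin n → Fin n) × (Fin n → Fin n)} (hx : x ∈ IP n t) : x ∈ PS n := by
  simp only [IP, HD, mem_filter, mem_product, mem_univ, true_and] at hx
  exact ⟨hx.1.1.1, hx.1.2.1, hx.1.1.2.trans hx.1.2.2.symm⟩

theorem idem_set (n t : ℕ) :
    {a : PElt n | a ∈ Jones n ∧ pmul a a = a ∧ (numPaths a : ℤ) = (t : ℤ)}
      = (fun p : (Fin n → Fin n) × (Fin n → Fin n) => mk p.1 p.2) '' (IP n t : Set _) := by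
  ext a
  constructor
  · rintro ⟨h1, h2, h3⟩
    obtain ⟨f, g, hfg, rfl⟩ := mk_surj h1
    have hc := (idem_iff hfg).1 h2
    rw [numPaths_eq hfg hc] at h3
    have h3 : (Fx g).card = t := by exact_mod_cast h3
    refine ⟨(f, g), ?_, rfl⟩
    rw [mem_coe]
    simp only [IP, HD, mem_filter, mem_product, mem_univ, true_and]
    exact ⟨⟨⟨hfg.1, hfg.2.2.trans h3⟩, hfg.2.1, h3⟩, hc⟩
  · rintro ⟨⟨f, g⟩, hx, rfl⟩
    rw [mem_coe] at hx
    have hps := IP_PS hx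
    simp only [IP, HD, mem_filter, mem_product, mem_univ, true_and] at hx
    refine ⟨mk_mem hps, (idem_iff hps).2 hx.2, ?_⟩
    change (numPaths (mk f g) : ℤ) = t
    rw [numPaths_eq hps hx.2, hx.1.2.2]

theorem IP_injOn (n t : ℕ) : Set.InjOn
    (fun p : (Fin n → Fin n) × (Fin n → Fin n) => mk p.1 p.2) (IP n t : Set _) :=
  mk_inj.mono fun _ hx => IP_PS (mem_coe.1 hx)

theorem eJdot_eq (n t : ℕ) : eJdot n (t : ℤ) = (IP n t).card := by
  unfold eJdot
  rw [idem_set, Nat.card_image_of_injOn (IP_injOn n t), Nat.card_eq_fintype_card]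
  exact Fintype.card_coe _

theorem HD_PS {n t : ℕ} {f g : Fin n → Fin n} (hf : f ∈ HD n t) (hg : g ∈ HD n t) :
    (f, g) ∈ PS n :=
  ⟨(mem_filter.1 hf).2.1, (mem_filter.1 hg).2.1,
    (mem_filter.1 hf).2.2.trans (mem_filter.1 hg).2.2.symm⟩

theorem IP_zero (n : ℕ) : IP n 0 = HD n 0 ×ˢ HD n 0 := by
  refine filter_true_of_mem ?_
  rintro ⟨f, g⟩ h
  rw [mem_product] at h
  exact crit_zero (HD_PS h.1 h.2) (mem_filter.1 h.2).2.2

theorem IP_one (n : ℕ) : IP n 1 = HD n 1 ×ˢ HD n 1 := by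
  refine filter_true_of_mem ?_
  rintro ⟨f, g⟩ h
  rw [mem_product] at h
  exact crit_one (HD_PS h.1 h.2) (mem_filter.1 h.2).2.2

/-- the pairs of a half diagram and a return -/
noncomputable def HR (n : ℕ) : Finset (Σ _ : Fin n → Fin n, Fin n × Fin n) :=
  (HD n 0).sigma fun f => Rs f

theorem HR_bij (n : ℕ) : Set.BijOn (fun x : (Σ _ : Fin n → Fin n, Fin n × Fin n) =>
    sw x.1 x.2.1 x.2.2) (HR n : Set _) (HD n 2 : Set _) := by
  refine ⟨?_, ?_, ?_⟩
  · rintro ⟨f, p, q⟩ h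
    simp only [HR, coe_sigma, Set.mem_sigma_iff, mem_coe, Rs, mem_filter, mem_univ, true_and] at h
    rw [mem_coe]
    simp only [HD, mem_filter, mem_univ, true_and]
    refine ⟨sw_good_rem (mem_filter.1 h.1).2.1 h.2, ?_⟩
    rw [Fx_sw h.1 h.2, card_pair h.2.1.ne]
  · rintro ⟨f, p, q⟩ h ⟨f', p', q'⟩ h' e
    simp only [HR, coe_sigma, Set.mem_sigma_iff, mem_coe, Rs, mem_filter, mem_univ, true_and] at h h'
    dsimp only at e
    have e1 := Fx_sw h.1 h.2
    rw [e, Fx_sw h'.1 h'.2] at e1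
    have l1 := h.2.1
    have l2 := h'.2.1
    have hp : p ∈ ({p', q'} : Finset _) := by rw [e1]; simp
    have hq : q ∈ ({p', q'} : Finset _) := by rw [e1]; simp
    simp only [mem_insert, mem_singleton] at hp hq
    have : p = p' ∧ q = q' := by
      rcases hp with rfl | rfl <;> rcases hq with rfl | rfl <;> first | exact ⟨rfl, rfl⟩ | skip
      · exact absurd l1 (lt_irrefl _)
      · exact absurd l1 (not_lt.2 l2.le)
      · exact absurd l1 (lt_irrefl _)
    obtain ⟨rfl, rfl⟩ := this
    have : f = f' := by
      rw [← sw_sw f p q, e, sw_sw]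
    subst this
    rfl
  · intro f hf
    rw [mem_coe] at hf
    simp only [HD, mem_filter, mem_univ, true_and] at hf
    obtain ⟨hg, hc⟩ := hf
    obtain ⟨p, q, hpq, hF⟩ : ∃ p q, p < q ∧ Fx f = {p, q} := by
      obtain ⟨a, b, hab, h⟩ := card_eq_two.1 hc
      rcases lt_or_gt_of_ne hab with h1 | h1
      · exact ⟨a, b, h1, h⟩
      · exact ⟨b, a, h1, by rw [h, pair_comm]⟩
    have fx : ∀ x, f x = x ↔ x = p ∨ x = q := by
      intro x
      have : x ∈ Fx f ↔ x ∈ ({p, q} : Finset _) := by rw [hF]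
      simpa [Fx] using this
    have hp := (fx p).2 (Or.inl rfl)
    have hq := (fx q).2 (Or.inr rfl)
    refine ⟨⟨sw f p q, p, q⟩, ?_, sw_sw f p q⟩
    simp only [HR, coe_sigma, Set.mem_sigma_iff, mem_coe, Rs, mem_filter, mem_univ, true_and]
    refine ⟨?_, sw_ret hg hp hq hpq⟩
    simp only [HD, mem_filter, mem_univ, true_and]
    refine ⟨sw_good_add hg hp hq hpq ?_, ?_⟩
    · intro x h1 h2 h3
      rcases (fx x).1 h3 with rfl | rfl
      · exact lt_irrefl _ h1
      · exact lt_irrefl _ h2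
    · rw [card_eq_zero]
      refine filter_eq_empty_iff.2 ?_
      intro x _ hx
      unfold sw at hx
      have := (fx x).1
      have := hpq.ne
      grind

/-- pairs of returns in the same component -/
noncomputable def same {n : ℕ} (f g : Fin n → Fin n) : Finset ((Fin n × Fin n) × (Fin n × Fin n)) :=
  (Rs f ×ˢ Rs g).filter fun x => CC f g x.1.1 x.2.1

/-- pairs of returns in different components -/
noncomputable def diff {n : ℕ} (f g : Fin n → Fin n) : Finset ((Fin n × Fin n) × (Fin n × Fin n)) :=
  (Rs f ×ˢ Rs g).filter fun x => ¬ CC f g x.1.1 x.2.1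

theorem card_IP_two (n : ℕ) :
    (IP n 2).card = ∑ x ∈ HD n 0 ×ˢ HD n 0, (same x.1 x.2).card := by
  rw [← card_sigma]
  symm
  have hb := HR_bij n
  refine card_bij (fun x _ => (sw x.1.1 x.2.1.1 x.2.1.2, sw x.1.2 x.2.2.1 x.2.2.2)) ?_ ?_ ?_
  · rintro ⟨⟨f, g⟩, ⟨p, q⟩, r, s⟩ h
    simp only [same, mem_sigma, mem_product, mem_filter, Rs, mem_univ, true_and] at h
    obtain ⟨⟨hf, hg⟩, ⟨h1, h2⟩, h3⟩ := h
    simp only [IP, mem_filter, mem_product]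
    refine ⟨⟨?_, ?_⟩, (crit_two hf hg h1 h2).2 h3⟩
    · exact hb.mapsTo (x := ⟨f, p, q⟩) (by simp [HR, Rs, hf, h1])
    · exact hb.mapsTo (x := ⟨g, r, s⟩) (by simp [HR, Rs, hg, h2])
  · rintro ⟨⟨f, g⟩, ⟨p, q⟩, r, s⟩ h ⟨⟨f', g'⟩, ⟨p', q'⟩, r', s'⟩ h' e
    simp only [same, mem_sigma, mem_product, mem_filter, Rs, mem_univ, true_and] at h h'
    obtain ⟨⟨hf, hg⟩, ⟨h1, h2⟩, h3⟩ := h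
    obtain ⟨⟨hf', hg'⟩, ⟨h1', h2'⟩, h3'⟩ := h'
    rw [Prod.mk.injEq] at e
    have a := hb.injOn (x₁ := ⟨f, p, q⟩) (x₂ := ⟨f', p', q'⟩) (by simp [HR, Rs, hf, h1])
      (by simp [HR, Rs, hf', h1']) e.1
    have b := hb.injOn (x₁ := ⟨g, r, s⟩) (x₂ := ⟨g', r', s'⟩) (by simp [HR, Rs, hg, h2])
      (by simp [HR, Rs, hg', h2']) e.2
    cases a
    cases b
    rfl
  · rintro ⟨f, g⟩ h
    simp only [IP, mem_filter, mem_product] at h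
    obtain ⟨⟨hf, hg⟩, hc⟩ := h
    obtain ⟨⟨f0, p, q⟩, h1, rfl⟩ := hb.surjOn (mem_coe.2 hf)
    obtain ⟨⟨g0, r, s⟩, h2, rfl⟩ := hb.surjOn (mem_coe.2 hg)
    simp only [HR, coe_sigma, Set.mem_sigma_iff, mem_coe, Rs, mem_filter, mem_univ, true_and] at h1 h2
    refine ⟨⟨(f0, g0), (p, q), r, s⟩, ?_, rfl⟩
    simp only [same, mem_sigma, mem_product, mem_filter, Rs, mem_univ, true_and]
    exact ⟨⟨h1.1, h2.1⟩, ⟨h1.2, h2.2⟩, (crit_two h1.1 h2.1 h1.2 h2.2).1 hc⟩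

end JLR

namespace JLR
open scoped Classical
open Finset

theorem HD_ne {n : ℕ} {f : Fin n → Fin n} (hf : f ∈ HD n 0) (i : Fin n) : f i ≠ i := by
  intro hi
  have h1 := (mem_filter.1 hf).2.2
  rw [card_eq_zero] at h1
  have : i ∈ Fx f := by simp [Fx, hi]
  rw [h1] at this; simp at this

/-- the components, as a finset -/
noncomputable def Th {n : ℕ} (f g : Fin n → Fin n) : Finset (Set (Fin n)) := univ.image (cl f g)

theorem active_down {n : ℕ} {f g : Fin n → Fin n} (hf : f ∈ HD n 0) (i : Fin n) :
    ¬ activeDown (mk f g) i := by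
  rintro ⟨j, hj⟩
  exact HD_ne hf i ((mk_lr i j).1 hj).1

theorem active_up {n : ℕ} {f g : Fin n → Fin n} (hg : g ∈ HD n 0) (i : Fin n) :
    ¬ activeUp (mk f g) i := by
  rintro ⟨j, hj⟩
  exact HD_ne hg i ((mk_rl j i).1 hj).2.1

theorem theta_eq {n : ℕ} {f g : Fin n → Fin n} (hf : f ∈ HD n 0) (hg : g ∈ HD n 0) :
    ThetaSet (mk f g) = (Th f g : Set (Set (Fin n))) := by
  have gf := (mem_filter.1 hf).2.1.inv
  have gg := (mem_filter.1 hg).2.1.inv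
  ext θ
  rw [mem_coe]
  simp only [Th, mem_image, mem_univ, true_and]
  constructor
  · rintro ⟨⟨h, -⟩, -⟩
    obtain ⟨i, rfl⟩ := (isComp_iff gf gg _).1 h
    exact ⟨i, rfl⟩
  · rintro ⟨i, rfl⟩
    refine ⟨⟨(isComp_iff gf gg _).2 ⟨i, rfl⟩, ?_⟩, ?_⟩
    · intro j _
      exact ⟨(hasLow_iff gf j).2 (HD_ne hf j), (hasUp_iff gg j).2 (HD_ne hg j)⟩
    · intro j _ l hl
      rcases hl with hl | hl
      · exact absurd hl (active_down hf l)
      · exact absurd hl (active_up hg l)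

theorem upperReturn_iff {n : ℕ} {f g : Fin n → Fin n} (hf : f ∈ HD n 0) (i j : Fin n) :
    UpperReturn (mk f g) i j ↔ Ret f i j := by
  have gf := (mem_filter.1 hf).2.1.inv
  unfold UpperReturn Ret
  simp only [mk_ll gf, active_down hf]
  constructor
  · rintro ⟨h1, h2, h3, -⟩
    have h2 : f i = j := by have := h1.ne; tauto
    exact ⟨h1, h2, fun ⟨k, l, a, b, c⟩ => h3 ⟨k, l, a, b, by tauto⟩⟩
  · rintro ⟨h1, h2, h3⟩
    refine ⟨h1, by tauto, fun ⟨k, l, a, b, c⟩ => h3 ⟨k, l, a, b, ?_⟩, by simp⟩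
    have : k ≠ l := (a.trans (h1.trans b)).ne
    tauto

theorem lowerReturn_iff {n : ℕ} {f g : Fin n → Fin n} (hg : g ∈ HD n 0) (i j : Fin n) :
    LowerReturn (mk f g) i j ↔ Ret g i j := by
  have gg := (mem_filter.1 hg).2.1.inv
  unfold LowerReturn Ret
  simp only [mk_rr gg, active_up hg]
  constructor
  · rintro ⟨h1, h2, h3, -⟩
    have h2 : g i = j := by have := h1.ne; tauto
    exact ⟨h1, h2, fun ⟨k, l, a, b, c⟩ => h3 ⟨k, l, a, b, by tauto⟩⟩
  · rintro ⟨h1, h2, h3⟩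
    refine ⟨h1, by tauto, fun ⟨k, l, a, b, c⟩ => h3 ⟨k, l, a, b, ?_⟩, by simp⟩
    have : k ≠ l := (a.trans (h1.trans b)).ne
    tauto

theorem uRet_eq {n : ℕ} {f g : Fin n → Fin n} (hf : f ∈ HD n 0) {θ : Set (Fin n)}
    (hθ : θ ∈ Th f g) :
    uRet (mk f g) θ = ((Rs f).filter fun x => cl f g x.1 = θ).card := by
  obtain ⟨i, -, rfl⟩ := mem_image.1 hθ
  unfold uRet
  rw [Nat.card_eq_fintype_card, Fintype.card_subtype]
  congr 1
  ext ⟨p, q⟩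
  simp only [upperReturn_iff hf, mem_filter, mem_univ, true_and, Rs]
  constructor
  · rintro ⟨h1, h2, h3⟩
    exact ⟨h3, (cl_eq_iff.2 h1).symm⟩
  · rintro ⟨h1, h2⟩
    have h2 := CC_symm (cl_eq_iff.1 h2)
    refine ⟨h2, ?_, h1⟩
    rw [← h1.2.1]
    exact CC_trans h2 (CC_f p)

theorem lRet_eq {n : ℕ} {f g : Fin n → Fin n} (hg : g ∈ HD n 0) {θ : Set (Fin n)}
    (hθ : θ ∈ Th f g) :
    lRet (mk f g) θ = ((Rs g).filter fun x => cl f g x.1 = θ).card := by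
  obtain ⟨i, -, rfl⟩ := mem_image.1 hθ
  unfold lRet
  rw [Nat.card_eq_fintype_card, Fintype.card_subtype]
  congr 1
  ext ⟨p, q⟩
  simp only [lowerReturn_iff hg, mem_filter, mem_univ, true_and, Rs]
  constructor
  · rintro ⟨h1, h2, h3⟩
    exact ⟨h3, (cl_eq_iff.2 h1).symm⟩
  · rintro ⟨h1, h2⟩
    have h2 := CC_symm (cl_eq_iff.1 h2)
    refine ⟨h2, ?_, h1⟩
    rw [← h1.2.1]
    exact CC_trans h2 (CC_g p)

theorem inner1 {n : ℕ} {f g : Fin n → Fin n} (hf : f ∈ HD n 0) (hg : g ∈ HD n 0) :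
    ∑ᶠ θ ∈ ThetaSet (mk f g), (uRet (mk f g) θ + lRet (mk f g) θ)
      = (Rs f).card + (Rs g).card := by
  rw [theta_eq hf hg, finsum_mem_coe_finset, sum_add_distrib]
  congr 1
  · rw [card_eq_sum_card_fiberwise (f := fun x => cl f g x.1) (t := Th f g)]
    · exact sum_congr rfl fun θ hθ => uRet_eq hf hθ
    · intro x _; exact mem_coe.2 (mem_image_of_mem _ (mem_univ _))
  · rw [card_eq_sum_card_fiberwise (f := fun x => cl f g x.1) (t := Th f g)]
    · exact sum_congr rfl fun θ hθ => lRet_eq hg hθ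
    · intro x _; exact mem_coe.2 (mem_image_of_mem _ (mem_univ _))

theorem inner2 {n : ℕ} {f g : Fin n → Fin n} (hf : f ∈ HD n 0) (hg : g ∈ HD n 0) :
    ∑ᶠ q ∈ {q : Set (Fin n) × Set (Fin n) |
      q.1 ∈ ThetaSet (mk f g) ∧ q.2 ∈ ThetaSet (mk f g) ∧ q.1 ≠ q.2},
        uRet (mk f g) q.1 * lRet (mk f g) q.2
      = (diff f g).card := by
  have e : {q : Set (Fin n) × Set (Fin n) |
      q.1 ∈ ThetaSet (mk f g) ∧ q.2 ∈ ThetaSet (mk f g) ∧ q.1 ≠ q.2}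
      = (((Th f g ×ˢ Th f g).filter fun q => q.1 ≠ q.2 : Finset _) : Set _) := by
    ext q
    rw [mem_coe, mem_filter, mem_product, theta_eq hf hg, and_assoc]
    exact Iff.rfl
  rw [e, finsum_mem_coe_finset]
  rw [card_eq_sum_card_fiberwise (s := diff f g) (f := fun x => (cl f g x.1.1, cl f g x.2.1))
    (t := (Th f g ×ˢ Th f g).filter fun q => q.1 ≠ q.2)]
  · refine sum_congr rfl ?_
    rintro ⟨θ, η⟩ h
    rw [mem_filter, mem_product] at h
    obtain ⟨⟨h1, h2⟩, h3⟩ := h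
    dsimp only at h1 h2 h3 ⊢
    rw [uRet_eq hf h1, lRet_eq hg h2, ← card_product]
    congr 1
    ext ⟨x, y⟩
    simp only [diff, mem_filter, mem_product, Prod.mk.injEq, ← cl_eq_iff]
    constructor
    · rintro ⟨⟨a, b⟩, c, d⟩
      exact ⟨⟨⟨a, c⟩, by rw [b, d]; exact h3⟩, b, d⟩
    · rintro ⟨⟨⟨a, c⟩, -⟩, b, d⟩
      exact ⟨⟨a, b⟩, c, d⟩
  · rintro x hx
    rw [mem_coe] at hx ⊢
    rw [mem_filter, mem_product]
    refine ⟨⟨mem_image_of_mem _ (mem_univ _), mem_image_of_mem _ (mem_univ _)⟩, ?_⟩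
    intro h
    exact (mem_filter.1 hx).2 (cl_eq_iff.1 h)

theorem S1dot_eq (n : ℕ) :
    S1dot n 0 = ∑ x ∈ HD n 0 ×ˢ HD n 0, ((Rs x.1).card + (Rs x.2).card) := by
  have h := idem_set n 0
  rw [Nat.cast_zero] at h
  unfold S1dot
  rw [h, finsum_mem_image (IP_injOn n 0), finsum_mem_coe_finset, IP_zero]
  refine sum_congr rfl fun x hx => ?_
  rw [mem_product] at hx
  exact inner1 hx.1 hx.2

theorem S2dot_eq (n : ℕ) :
    S2dot n 0 = ∑ x ∈ HD n 0 ×ˢ HD n 0, (diff x.1 x.2).card := by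
  have h := idem_set n 0
  rw [Nat.cast_zero] at h
  unfold S2dot
  rw [h, finsum_mem_image (IP_injOn n 0), finsum_mem_coe_finset, IP_zero]
  refine sum_congr rfl fun x hx => ?_
  rw [mem_product] at hx
  exact inner2 hx.1 hx.2

theorem same_diff {n : ℕ} (f g : Fin n → Fin n) :
    (same f g).card + (diff f g).card = (Rs f).card * (Rs g).card := by
  rw [← card_product]
  exact card_filter_add_card_filter_not _

theorem final_count (k : ℕ) :
    eJdot (2 * k + 1) 1 = eJdot (2 * k) 0 + S1dot (2 * k) 0 + S2dot (2 * k) 0 + eJdot (2 * k) 2 := by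
  have h1 := eJdot_eq (2 * k + 1) 1
  have h0 := eJdot_eq (2 * k) 0
  have h2 := eJdot_eq (2 * k) 2
  rw [Nat.cast_one] at h1
  rw [Nat.cast_zero] at h0
  rw [Nat.cast_ofNat] at h2
  rw [h1, h0, h2, S1dot_eq, S2dot_eq, card_IP_two, IP_zero, IP_one, card_product, card_HD_one,
    ← sum_returns, sum_mul_sum, ← sum_product', card_eq_sum_ones, ← sum_add_distrib,
    ← sum_add_distrib, ← sum_add_distrib]
  refine sum_congr rfl fun x _ => ?_
  have := same_diff x.1 x.2
  linarith [add_mul 1 (Rs x.1).card (1 + (Rs x.2).card),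
    mul_add (Rs x.1).card 1 (Rs x.2).card]

end JLR

/-- Corollary 6.2. For all `k ≥ 1`:
(i) `e_{2k;·,0} = C_k² = e_{2k−1;·,1}`; and
(ii) `e_{2k;·,2} = e_{2k+1;·,1} − e_{2k;·,0} − S⁽¹⁾_{2k;·,0} − S⁽²⁾_{2k;·,0}`. -/
theorem jones_low_rank_counts (k : ℕ) (hk : 1 ≤ k) :
    (eJdot (2 * k) 0 = catalan k ^ 2 ∧ eJdot (2 * k - 1) 1 = catalan k ^ 2) ∧
    (eJdot (2 * k) 2 : ℤ) = (eJdot (2 * k + 1) 1 : ℤ) - (eJdot (2 * k) 0 : ℤ) -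
      (S1dot (2 * k) 0 : ℤ) - (S2dot (2 * k) 0 : ℤ) := by
  refine ⟨⟨?_, ?_⟩, ?_⟩
  · have h0 := JLR.eJdot_eq (2 * k) 0
    rw [Nat.cast_zero] at h0
    rw [h0, JLR.IP_zero, Finset.card_product, JLR.HD_zero, JLR.card_perfect, sq]
  · obtain ⟨m, rfl⟩ : ∃ m, k = m + 1 := ⟨k - 1, by omega⟩
    have h1 := JLR.eJdot_eq (2 * m + 1) 1
    rw [Nat.cast_one] at h1
    rw [show 2 * (m + 1) - 1 = 2 * m + 1 by omega, h1, JLR.IP_one, Finset.card_product,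
      JLR.card_HD_one, sq]
  · have := JLR.final_count k
    omega
end
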